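/- arXiv:1308.5612 — 3 statements merged into one kernel-verified Lean document; each statement's English description precedes it below -/
import Mathlib

section
/- (Non-local Brézis–Lieb lemma.) Let d ≥ 1, 0 < λ < d, 2 < p < ∞, and let f_n, f be measurable functions on ℝ^d such that f_n(x) → f(x) for a.e. x ∈ ℝ^d, sup_n I_λ(f_n) < ∞, and sup_n ‖f_n‖_{L^p} < ∞. Then I_λ(f_n) − I_λ(f_n − f) − I_λ(f) → 0 as n → ∞; that is, I_λ(f_n) = I_λ(f) + I_λ(f_n − f) + o(1). -/
open MeasureTheory Filter ENNReal

noncomputable section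

/-- The Riesz energy `I_λ(g) = ∬ |g(x)|² |g(y)|² |x-y|^{-λ} dx dy`. -/
def rieszEnergy (d : ℕ) (lam : ℝ) (g : EuclideanSpace ℝ (Fin d) → ℂ) : ℝ≥0∞ :=
  ∫⁻ x, ∫⁻ y, (‖g x‖₊ : ℝ≥0∞) ^ 2 * (‖g y‖₊ : ℝ≥0∞) ^ 2 *
    ENNReal.ofReal (‖x - y‖ ^ (-lam))

namespace RieszBL

/-- Euclidean space. -/
abbrev E (d : ℕ) := EuclideanSpace ℝ (Fin d)

lemma rpow_neg_anti {a b : ℝ≥0∞} (h : a ≤ b) {s : ℝ} (hs : 0 ≤ s) : b ^ (-s) ≤ a ^ (-s) := by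
  rw [ENNReal.rpow_neg, ENNReal.rpow_neg]
  exact ENNReal.inv_le_inv.2 (ENNReal.rpow_le_rpow h hs)

lemma nontrivial_E {d : ℕ} (hd : 1 ≤ d) : Nontrivial (E d) := by
  have : Nonempty (Fin d) := ⟨⟨0, hd⟩⟩
  infer_instance

lemma lintegral_smul_scale {d : ℕ} (F : E d → ℝ≥0∞) (hF : Measurable F) {r : ℝ} (hr : 0 < r) :
    ∫⁻ w, F w = ENNReal.ofReal (r ^ d) * ∫⁻ w, F (r • w) := by
  have h := Measure.map_addHaar_smul (volume : Measure (E d)) hr.ne'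
  have h2 : ∫⁻ w, F (r • w) = ∫⁻ w, F w ∂(Measure.map (fun x => r • x) (volume : Measure (E d))) := by
    rw [lintegral_map hF (measurable_const_smul r)]
  rw [h2, h, lintegral_smul_measure, smul_eq_mul, ← mul_assoc, ← ENNReal.ofReal_mul (by positivity),
    finrank_euclideanSpace_fin, abs_of_pos (by positivity), mul_inv_cancel₀ (by positivity)]
  simp

lemma ball_fin {d : ℕ} (hd : 1 ≤ d) {s : ℝ} (hsd : s < d) :
    ∫⁻ w in Metric.ball (0 : E d) 1, ‖w‖ₑ ^ (-s) < ⊤ := by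
  have := nontrivial_E hd
  let f : ℝ → ℝ := (Set.Iio 1).indicator (fun y => y ^ (-s))
  have hint : Integrable (fun x : E d => f ‖x‖) volume := by
    rw [integrable_fun_norm_addHaar, finrank_euclideanSpace_fin]
    have h1 : IntegrableOn (fun y : ℝ => y ^ ((d : ℝ) - 1 - s)) (Set.Ioo 0 1) :=
      (intervalIntegral.integrableOn_Ioo_rpow_iff one_pos).2 (by linarith)
    have h2 : IntegrableOn ((Set.Iio (1:ℝ)).indicator (fun y : ℝ => y ^ ((d : ℝ) - 1 - s))) (Set.Ioi 0) := by
      rw [IntegrableOn, integrable_indicator_iff measurableSet_Iio, IntegrableOn,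
        Measure.restrict_restrict measurableSet_Iio]
      have : Set.Iio (1:ℝ) ∩ Set.Ioi 0 = Set.Ioo 0 1 := by ext; simp [and_comm]
      rw [this]; exact h1
    refine h2.congr_fun (fun y hy => ?_) measurableSet_Ioi
    simp only [Set.mem_Ioi] at hy
    simp only [f, Set.indicator_apply, smul_eq_mul]
    split_ifs
    · rw [← Real.rpow_natCast, ← Real.rpow_add hy]
      congr 1
      push_cast [Nat.cast_sub hd]; ring
    · simp
  have h3 := hint.2
  rw [HasFiniteIntegral] at h3
  refine lt_of_le_of_lt ?_ h3
  rw [← lintegral_indicator measurableSet_ball]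
  refine lintegral_mono_ae ?_
  have h0 : ∀ᵐ w : E d, w ≠ 0 := by
    simp [ae_iff]
  filter_upwards [h0] with w hw
  by_cases hw1 : ‖w‖ < 1
  · have : w ∈ Metric.ball (0 : E d) 1 := by simpa using hw1
    have h4 : ‖w‖ ∈ Set.Iio (1:ℝ) := hw1
    have hpos : 0 < ‖w‖ := norm_pos_iff.2 hw
    rw [Set.indicator_of_mem this]
    simp only [f, Set.indicator_of_mem h4]
    rw [← ofReal_norm, ENNReal.ofReal_rpow_of_pos hpos, ← ofReal_norm,
      Real.norm_of_nonneg (by positivity)]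
  · have : w ∉ Metric.ball (0 : E d) 1 := by simpa using hw1
    rw [Set.indicator_of_notMem this]; simp

lemma meas_enorm_rpow {d : ℕ} (s : ℝ) : Measurable (fun w : E d => ‖w‖ₑ ^ (-s)) := by fun_prop

lemma whole_fin {d : ℕ} (hd : 1 ≤ d) {a : ℝ} (ha : 0 < a) (had : a < d) (had2 : d < 2 * a) :
    ∫⁻ w : E d, ‖w‖ₑ ^ (-a) * (max ‖w‖ₑ 1) ^ (-a) < ⊤ := by
  have hle : ∀ w : E d, ‖w‖ₑ ^ (-a) * (max ‖w‖ₑ 1) ^ (-a) ≤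
      (Metric.ball (0 : E d) 1).indicator (fun w => ‖w‖ₑ ^ (-a)) w +
      ENNReal.ofReal (2 ^ (2 * a)) * ENNReal.ofReal ((1 + ‖w‖) ^ (-(2 * a))) := by
    intro w
    by_cases hw1 : ‖w‖ < 1
    · have : w ∈ Metric.ball (0 : E d) 1 := by simpa using hw1
      rw [Set.indicator_of_mem this]
      refine le_add_right ?_
      calc _ ≤ ‖w‖ₑ ^ (-a) * 1 := by
            gcongr
            calc _ ≤ (1:ℝ≥0∞) ^ (-a) := rpow_neg_anti (le_max_right _ _) ha.le
              _ = 1 := by simp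
        _ = _ := by simp
    · have : w ∉ Metric.ball (0 : E d) 1 := by simpa using hw1
      push Not at hw1
      rw [Set.indicator_of_notMem this, zero_add]
      have hpos : 0 < ‖w‖ := by linarith
      have : max ‖w‖ₑ 1 = ‖w‖ₑ := max_eq_left (by
        rw [← ofReal_norm]; exact ENNReal.one_le_ofReal.2 hw1)
      rw [this, ← ofReal_norm, ENNReal.ofReal_rpow_of_pos hpos,
        ← ENNReal.ofReal_mul (by positivity), ← ENNReal.ofReal_mul (by positivity)]
      apply ENNReal.ofReal_le_ofReal
      rw [← Real.rpow_add hpos]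
      have h1 : (1 + ‖w‖) ^ (-(2 * a)) ≥ (2 * ‖w‖) ^ (-(2*a)) :=
        Real.rpow_le_rpow_of_nonpos (by positivity) (by linarith) (by linarith)
      have h2 : (2 * ‖w‖) ^ (-(2*a)) = 2 ^ (-(2*a)) * ‖w‖ ^ (-(2*a)) :=
        Real.mul_rpow (by norm_num) hpos.le
      have h3 : (2:ℝ) ^ (2*a) * 2 ^ (-(2*a)) = 1 := by
        rw [← Real.rpow_add (by norm_num)]; simp
      calc ‖w‖ ^ (-a + -a) = (2:ℝ) ^ (2*a) * 2 ^ (-(2*a)) * ‖w‖ ^ (-(2*a)) := by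
            rw [h3, one_mul]; congr 1; ring
        _ = (2:ℝ) ^ (2*a) * (2 * ‖w‖) ^ (-(2*a)) := by rw [h2, mul_assoc]
        _ ≤ _ := by gcongr
  refine lt_of_le_of_lt (lintegral_mono hle) ?_
  rw [lintegral_add_left ((meas_enorm_rpow a).indicator measurableSet_ball),
    lintegral_indicator measurableSet_ball, lintegral_const_mul _ (by fun_prop)]
  refine ENNReal.add_lt_top.2 ⟨ball_fin hd had, ENNReal.mul_lt_top (by simp) ?_⟩
  exact finite_integral_one_add_norm (by simpa using had2)

lemma enorm_smul_pos {d : ℕ} {r : ℝ} (hr : 0 < r) (w : E d) :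
    ‖r • w‖ₑ = ENNReal.ofReal r * ‖w‖ₑ := by
  rw [enorm_smul, Real.enorm_of_nonneg hr.le]

lemma scale_whole {d : ℕ} {a : ℝ} {r : ℝ} (hr : 0 < r) :
    ∫⁻ w : E d, ‖w‖ₑ ^ (-a) * (max ‖w‖ₑ (ENNReal.ofReal r)) ^ (-a) =
      ENNReal.ofReal r ^ ((d : ℝ) - 2 * a) * ∫⁻ w : E d, ‖w‖ₑ ^ (-a) * (max ‖w‖ₑ 1) ^ (-a) := by
  rw [lintegral_smul_scale _ (by fun_prop) hr]
  have h : ∀ w : E d, ‖r • w‖ₑ ^ (-a) * (max ‖r • w‖ₑ (ENNReal.ofReal r)) ^ (-a) =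
      ENNReal.ofReal r ^ (-(2 * a)) * (‖w‖ₑ ^ (-a) * (max ‖w‖ₑ 1) ^ (-a)) := by
    intro w
    have : max ‖r • w‖ₑ (ENNReal.ofReal r) = ENNReal.ofReal r * max ‖w‖ₑ 1 := by
      rw [enorm_smul_pos hr, mul_max, mul_one]
    rw [this, enorm_smul_pos hr, ENNReal.mul_rpow_of_ne_top (by simp) (by simp),
      ENNReal.mul_rpow_of_ne_top (by simp) (by simp),
      show -(2 * a) = -a + -a by ring, ENNReal.rpow_add _ _ (by simpa using hr) (by simp)]
    ring
  rw [lintegral_congr h]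
  rw [lintegral_const_mul _ (by fun_prop), ← mul_assoc]
  congr 1
  rw [ENNReal.ofReal_pow hr.le, ← ENNReal.rpow_natCast, ← ENNReal.rpow_add _ _ (by simpa using hr) (by simp)]
  congr 1

lemma scale_ball {d : ℕ} {s : ℝ} {r : ℝ} (hr : 0 < r) :
    ∫⁻ w in Metric.ball (0 : E d) r, ‖w‖ₑ ^ (-s) =
      ENNReal.ofReal r ^ ((d : ℝ) - s) * ∫⁻ w in Metric.ball (0 : E d) 1, ‖w‖ₑ ^ (-s) := by
  rw [← lintegral_indicator measurableSet_ball, ← lintegral_indicator measurableSet_ball]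
  rw [lintegral_smul_scale _ ((meas_enorm_rpow s).indicator measurableSet_ball) hr]
  have h : ∀ w : E d, (Metric.ball (0 : E d) r).indicator (fun w => ‖w‖ₑ ^ (-s)) (r • w) =
      ENNReal.ofReal r ^ (-s) * (Metric.ball (0 : E d) 1).indicator (fun w => ‖w‖ₑ ^ (-s)) w := by
    intro w
    have : r • w ∈ Metric.ball (0 : E d) r ↔ w ∈ Metric.ball (0 : E d) 1 := by
      simp only [Metric.mem_ball, dist_zero_right, norm_smul, Real.norm_of_nonneg hr.le]
      constructor
      · intro h; by_contra h'; push Not at h'; nlinarith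
      · intro h; nlinarith
    by_cases hw : w ∈ Metric.ball (0 : E d) 1
    · rw [Set.indicator_of_mem hw, Set.indicator_of_mem (this.2 hw), enorm_smul_pos hr,
        ENNReal.mul_rpow_of_ne_top (by simp) (by simp)]
    · rw [Set.indicator_of_notMem hw, Set.indicator_of_notMem (fun h => hw (this.1 h)), mul_zero]
  rw [lintegral_congr h]
  rw [lintegral_const_mul _ ((meas_enorm_rpow s).indicator measurableSet_ball), ← mul_assoc]
  congr 1
  rw [ENNReal.ofReal_pow hr.le, ← ENNReal.rpow_natCast, ← ENNReal.rpow_add _ _ (by simpa using hr) (by simp)]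
  congr 1

/-- Riesz kernel. -/
def K {d : ℕ} (s : ℝ) (x y : E d) : ℝ≥0∞ := ‖x - y‖ₑ ^ (-s)

/-- Bilinear energy. -/
def D {d : ℕ} (s : ℝ) (u v : E d → ℝ≥0∞) : ℝ≥0∞ := ∫⁻ x, ∫⁻ y, u x * v y * K s x y

@[fun_prop]
lemma meas_K {d : ℕ} (s : ℝ) : Measurable (fun p : E d × E d => K s p.1 p.2) := by
  unfold K; fun_prop

@[fun_prop]
lemma meas_K' {d : ℕ} {α : Type*} [MeasurableSpace α] (s : ℝ) {f g : α → E d}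
    (hf : Measurable f) (hg : Measurable g) : Measurable (fun p => K s (f p) (g p)) := by
  unfold K; fun_prop

lemma K_symm {d : ℕ} (s : ℝ) (x y : E d) : K s x y = K s y x := by
  unfold K; rw [← enorm_neg, neg_sub]

lemma K_lower {d : ℕ} (hd : 1 ≤ d) {lam : ℝ} (h0 : 0 < lam) :
    ∃ c : ℝ≥0∞, c ≠ ⊤ ∧ ∀ x y : E d, x ≠ y →
      K lam x y ≤ c * ∫⁻ z, K ((d + lam) / 2) x z * K ((d + lam) / 2) y z := by
  have := nontrivial_E hd
  set a := ((d : ℝ) + lam) / 2 with ha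
  have hapos : 0 < a := by positivity
  set V := (volume : Measure (E d)) (Metric.ball 0 1) with hV
  have hV0 : V ≠ 0 := (Metric.measure_ball_pos volume _ one_pos).ne'
  have hVt : V ≠ ⊤ := measure_ball_lt_top.ne
  have h20 : (2:ℝ≥0∞) ^ (-a) ≠ 0 := by simp [ENNReal.rpow_eq_zero_iff]
  have h2t : (2:ℝ≥0∞) ^ (-a) ≠ ⊤ := by simp [ENNReal.rpow_eq_top_iff]
  refine ⟨(V * 2 ^ (-a))⁻¹, by simp [hV0, h20], fun x y hxy => ?_⟩
  set r := ‖x - y‖ with hr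
  have hrpos : 0 < r := norm_pos_iff.2 (sub_ne_zero.2 hxy)
  have hre : ‖x - y‖ₑ = ENNReal.ofReal r := (ofReal_norm _).symm
  have hr0 : ENNReal.ofReal r ≠ 0 := by simpa using hrpos
  have key : ENNReal.ofReal r ^ (-lam) * (V * 2 ^ (-a)) ≤ ∫⁻ z, K a x z * K a y z := by
    calc ENNReal.ofReal r ^ (-lam) * (V * 2 ^ (-a))
        = ENNReal.ofReal r ^ (-a) * (2 * ENNReal.ofReal r) ^ (-a) *
          volume (Metric.ball x r) := by
          rw [Measure.addHaar_ball _ _ hrpos.le, finrank_euclideanSpace_fin,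
            ENNReal.mul_rpow_of_ne_top (by simp) (by simp), ENNReal.ofReal_pow hrpos.le,
            ← ENNReal.rpow_natCast, show -lam = -a + -a + d by rw [ha]; ring,
            ENNReal.rpow_add _ _ hr0 (by simp), ENNReal.rpow_add _ _ hr0 (by simp)]
          ring
      _ = ∫⁻ z in Metric.ball x r, ENNReal.ofReal r ^ (-a) * (2 * ENNReal.ofReal r) ^ (-a) := by
          simp
      _ ≤ ∫⁻ z in Metric.ball x r, K a x z * K a y z := by
          refine setLIntegral_mono (by fun_prop) (fun z hz => ?_)
          have hz' : ‖x - z‖ < r := by rw [← dist_eq_norm, dist_comm]; exact hz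
          have hz2 : ‖y - z‖ ≤ 2 * r := by
            have : y - z = -(x - y) + (x - z) := by abel
            calc ‖y - z‖ ≤ ‖-(x-y)‖ + ‖x - z‖ := by rw [this]; exact norm_add_le _ _
              _ ≤ _ := by rw [norm_neg]; linarith
          unfold K
          refine mul_le_mul' ?_ ?_
          · apply rpow_neg_anti _ hapos.le
            rw [← ofReal_norm]; exact ENNReal.ofReal_le_ofReal hz'.le
          · apply rpow_neg_anti _ hapos.le
            rw [← ofReal_norm]
            calc _ ≤ ENNReal.ofReal (2 * r) := ENNReal.ofReal_le_ofReal hz2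
              _ = _ := by rw [ENNReal.ofReal_mul (by norm_num)]; simp
      _ ≤ _ := setLIntegral_le_lintegral _ _
  have hne : V * 2 ^ (-a) ≠ 0 := mul_ne_zero hV0 h20
  have hnt : V * 2 ^ (-a) ≠ ⊤ := ENNReal.mul_ne_top hVt h2t
  calc K lam x y = (V * 2 ^ (-a))⁻¹ * (ENNReal.ofReal r ^ (-lam) * (V * 2 ^ (-a))) := by
        unfold K
        rw [hre, mul_comm (ENNReal.ofReal r ^ _), ← mul_assoc, ENNReal.inv_mul_cancel hne hnt, one_mul]
    _ ≤ _ := by gcongr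

lemma K_upper {d : ℕ} (hd : 1 ≤ d) {lam : ℝ} (h0 : 0 < lam) (h1 : lam < d) :
    ∃ c : ℝ≥0∞, c ≠ ⊤ ∧ ∀ x y : E d, x ≠ y →
      ∫⁻ z, K ((d + lam) / 2) x z * K ((d + lam) / 2) y z ≤ c * K lam x y := by
  set a := ((d : ℝ) + lam) / 2 with ha
  have hapos : 0 < a := by positivity
  set C := ∫⁻ w : E d, ‖w‖ₑ ^ (-a) * (max ‖w‖ₑ 1) ^ (-a) with hC
  have hCt : C < ⊤ := whole_fin hd hapos (by rw [ha]; linarith) (by rw [ha]; linarith)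
  refine ⟨2 * 2 ^ lam * C, ?_, fun x y hxy => ?_⟩
  · exact ENNReal.mul_ne_top (ENNReal.mul_ne_top (by simp) (by simp [ENNReal.rpow_eq_top_iff])) hCt.ne
  set r := ‖x - y‖ with hr
  have hrpos : 0 < r := norm_pos_iff.2 (sub_ne_zero.2 hxy)
  let φ : E d → ℝ≥0∞ := fun w => ‖w‖ₑ ^ (-a) * (max ‖w‖ₑ (ENNReal.ofReal (r / 2))) ^ (-a)
  have hφm : Measurable φ := by fun_prop
  have hpt : ∀ z, K a x z * K a y z ≤ φ (x - z) + φ (y - z) := by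
    intro z
    have htri : r ≤ ‖x - z‖ + ‖y - z‖ := by
      have : x - y = (x - z) - (y - z) := by abel
      rw [hr, this]; exact norm_sub_le _ _
    rcases le_total ‖x - z‖ ‖y - z‖ with h | h
    · refine le_add_right ?_
      unfold K
      simp only [φ]
      refine mul_le_mul' le_rfl ?_
      apply rpow_neg_anti _ hapos.le
      rw [← ofReal_norm, ← ofReal_norm]
      exact max_le (ENNReal.ofReal_le_ofReal h) (ENNReal.ofReal_le_ofReal (by linarith))
    · refine le_add_left ?_
      rw [mul_comm]
      unfold K
      simp only [φ]
      refine mul_le_mul' le_rfl ?_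
      apply rpow_neg_anti _ hapos.le
      rw [← ofReal_norm, ← ofReal_norm]
      exact max_le (ENNReal.ofReal_le_ofReal h) (ENNReal.ofReal_le_ofReal (by linarith))
  calc _ ≤ ∫⁻ z, (φ (x - z) + φ (y - z)) := lintegral_mono hpt
    _ = 2 * ∫⁻ w, φ w := by
      rw [lintegral_add_left (by fun_prop), lintegral_sub_left_eq_self φ,
        lintegral_sub_left_eq_self φ, two_mul]
    _ = 2 * (ENNReal.ofReal (r / 2) ^ (-lam) * C) := by
      rw [scale_whole (by positivity : 0 < r / 2)]
      congr 3
      rw [ha]; ring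
    _ = 2 * 2 ^ lam * C * K lam x y := by
      have : ENNReal.ofReal (r / 2) = ENNReal.ofReal r * 2⁻¹ := by
        rw [div_eq_mul_inv, ENNReal.ofReal_mul hrpos.le, ENNReal.ofReal_inv_of_pos (by norm_num)]
        simp
      rw [this, ENNReal.mul_rpow_of_ne_top (by simp) (by simp), ENNReal.inv_rpow,
        ENNReal.rpow_neg 2, inv_inv]
      unfold K
      rw [← ofReal_norm]
      ring

lemma triple_swap {d : ℕ} (a : ℝ) (u v : E d → ℝ≥0∞) (hu : Measurable u) (hv : Measurable v) :
    ∫⁻ x, ∫⁻ y, u x * v y * ∫⁻ z, K a x z * K a y z =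
      ∫⁻ z, (∫⁻ x, u x * K a x z) * (∫⁻ y, v y * K a y z) := by
  have h1 : ∀ z, (∫⁻ x, u x * K a x z) * (∫⁻ y, v y * K a y z) =
      ∫⁻ x, ∫⁻ y, u x * v y * (K a x z * K a y z) := by
    intro z
    rw [← lintegral_mul_const _ (by fun_prop)]
    refine lintegral_congr fun x => ?_
    rw [← lintegral_const_mul _ (by fun_prop)]
    refine lintegral_congr fun y => ?_
    ring
  simp_rw [h1]
  symm
  rw [lintegral_lintegral_swap]
  · refine lintegral_congr fun x => ?_
    rw [lintegral_lintegral_swap]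
    · refine lintegral_congr fun y => ?_
      rw [lintegral_const_mul _ (by fun_prop)]
    · exact Measurable.aemeasurable (by unfold Function.uncurry; fun_prop)
  · apply Measurable.aemeasurable
    unfold Function.uncurry
    apply Measurable.lintegral_prod_right'
      (f := fun p : (E d × E d) × E d => u p.1.2 * v p.2 * (K a p.1.2 p.1.1 * K a p.2 p.1.1))
    fun_prop

lemma ae_ne' {d : ℕ} (hd : 1 ≤ d) (x : E d) : ∀ᵐ y : E d, x ≠ y := by
  have := nontrivial_E hd
  have : ∀ᵐ y : E d, y ≠ x := by simp [ae_iff]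
  filter_upwards [this] with y hy using hy.symm

lemma D_cs {d : ℕ} (hd : 1 ≤ d) {lam : ℝ} (h0 : 0 < lam) (h1 : lam < d) :
    ∃ C : ℝ≥0∞, C ≠ ⊤ ∧ ∀ u v : E d → ℝ≥0∞, Measurable u → Measurable v →
      D lam u v ≤ C * (D lam u u ^ (1 / 2 : ℝ) * D lam v v ^ (1 / 2 : ℝ)) := by
  obtain ⟨c1, hc1, H1⟩ := K_lower hd h0
  obtain ⟨c2, hc2, H2⟩ := K_upper hd h0 h1
  set a := ((d : ℝ) + lam) / 2 with ha
  have hN : ∀ u : E d → ℝ≥0∞, Measurable u →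
      ∫⁻ z, (∫⁻ x, u x * K a x z) ^ (2 : ℝ) ≤ c2 * D lam u u := by
    intro u hu
    calc ∫⁻ z, (∫⁻ x, u x * K a x z) ^ (2 : ℝ)
        = ∫⁻ z, (∫⁻ x, u x * K a x z) * (∫⁻ y, u y * K a y z) := by
          refine lintegral_congr fun z => ?_
          rw [ENNReal.rpow_two, sq]
      _ = ∫⁻ x, ∫⁻ y, u x * u y * ∫⁻ z, K a x z * K a y z := (triple_swap a u u hu hu).symm
      _ ≤ ∫⁻ x, ∫⁻ y, c2 * (u x * u y * K lam x y) := by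
          refine lintegral_mono fun x => lintegral_mono_ae ?_
          filter_upwards [ae_ne' hd x] with y hy
          calc _ ≤ u x * u y * (c2 * K lam x y) := by gcongr; exact H2 x y hy
            _ = _ := by ring
      _ = c2 * D lam u u := by
          unfold D
          rw [← lintegral_const_mul' _ _ hc2]
          refine lintegral_congr fun x => ?_
          rw [lintegral_const_mul' _ _ hc2]
  refine ⟨c1 * (c2 ^ (1/2:ℝ) * c2 ^ (1/2:ℝ)), ?_, fun u v hu hv => ?_⟩
  · have : c2 ^ (1/2:ℝ) ≠ ⊤ := ENNReal.rpow_ne_top_of_nonneg (by norm_num) hc2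
    exact ENNReal.mul_ne_top hc1 (ENNReal.mul_ne_top this this)
  have hm : ∀ u : E d → ℝ≥0∞, Measurable u → Measurable (fun z => ∫⁻ x, u x * K a x z) := by
    intro u hu
    apply Measurable.lintegral_prod_right' (f := fun p : E d × E d => u p.2 * K a p.2 p.1)
    fun_prop
  calc D lam u v ≤ ∫⁻ x, ∫⁻ y, c1 * (u x * v y * ∫⁻ z, K a x z * K a y z) := by
          refine lintegral_mono fun x => lintegral_mono_ae ?_
          filter_upwards [ae_ne' hd x] with y hy
          calc _ ≤ u x * v y * (c1 * ∫⁻ z, K a x z * K a y z) := by gcongr; exact H1 x y hy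
            _ = _ := by ring
    _ = c1 * ∫⁻ z, (∫⁻ x, u x * K a x z) * (∫⁻ y, v y * K a y z) := by
          rw [← triple_swap a u v hu hv, ← lintegral_const_mul' _ _ hc1]
          refine lintegral_congr fun x => ?_
          rw [lintegral_const_mul' _ _ hc1]
    _ ≤ c1 * ((∫⁻ z, (∫⁻ x, u x * K a x z) ^ (2 : ℝ)) ^ (1/2:ℝ) *
          (∫⁻ z, (∫⁻ x, v x * K a x z) ^ (2 : ℝ)) ^ (1/2:ℝ)) := by
          gcongr
          exact ENNReal.lintegral_mul_le_Lp_mul_Lq volume Real.HolderConjugate.two_two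
            (hm u hu).aemeasurable (hm v hv).aemeasurable
    _ ≤ c1 * ((c2 * D lam u u) ^ (1/2:ℝ) * (c2 * D lam v v) ^ (1/2:ℝ)) := by
          gcongr
          · exact hN u hu
          · exact hN v hv
    _ = _ := by
          rw [ENNReal.mul_rpow_of_nonneg _ _ (by norm_num), ENNReal.mul_rpow_of_nonneg _ _ (by norm_num)]
          ring

lemma squeeze2 {a : ℕ → ℝ≥0∞} {b : ℕ → ℕ → ℝ≥0∞} {c : ℕ → ℝ≥0∞}
    (h : ∀ᶠ k in atTop, ∀ n, a n ≤ b k n + c k)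
    (hb : ∀ᶠ k in atTop, Tendsto (b k) atTop (nhds 0)) (hc : Tendsto c atTop (nhds 0)) :
    Tendsto a atTop (nhds 0) := by
  rw [ENNReal.tendsto_nhds_zero]
  intro ε hε
  have hε2 : 0 < ε / 2 := ENNReal.half_pos hε.ne'
  obtain ⟨k, h1, h2, h3⟩ := (h.and (hb.and (ENNReal.tendsto_nhds_zero.1 hc _ hε2))).exists
  filter_upwards [ENNReal.tendsto_nhds_zero.1 h2 _ hε2] with n hn
  calc a n ≤ b k n + c k := h1 n
    _ ≤ ε / 2 + ε / 2 := add_le_add hn h3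
    _ = ε := ENNReal.add_halves ε

lemma tendsto_natCast_rpow_neg {s : ℝ} (hs : 0 < s) :
    Tendsto (fun k : ℕ => (k : ℝ≥0∞) ^ (-s)) atTop (nhds 0) := by
  have h := ((ENNReal.continuous_rpow_const (y := s)).tendsto ⊤).comp ENNReal.tendsto_nat_nhds_top
  rw [ENNReal.top_rpow_of_pos hs] at h
  have h2 := tendsto_inv_iff.2 h
  simpa [ENNReal.rpow_neg, Function.comp_def] using h2

lemma sq_le_trunc {t : ℝ≥0∞} (ht : t ≠ ⊤) {p : ℝ} (hp : 2 < p) (T : ℝ≥0∞) :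
    t ^ 2 ≤ min (t ^ 2) (T ^ 2) + T ^ (-(p - 2)) * t ^ p := by
  rcases le_total t T with h | h
  · refine le_add_right (le_min le_rfl ?_)
    gcongr
  · refine le_add_left ?_
    rcases eq_or_ne t 0 with h0 | h0
    · simp [h0]
    calc t ^ 2 = t ^ (-(p-2)) * t ^ p := by
          rw [← ENNReal.rpow_add _ _ h0 ht, ← ENNReal.rpow_natCast]
          congr 1; push_cast; ring
      _ ≤ _ := mul_le_mul' (rpow_neg_anti h (by linarith)) le_rfl

lemma near_tendsto {d : ℕ} {p : ℝ} (hp : 2 < p) (g : ℕ → E d → ℂ) (hg : ∀ n, Measurable (g n))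
    (hae : ∀ᵐ x, Tendsto (fun n => g n x) atTop (nhds 0)) {B : ℝ≥0∞} (hB : B ≠ ⊤)
    (hb : ∀ n, ∫⁻ x, ‖g n x‖ₑ ^ p ≤ B) (R : ℝ) :
    Tendsto (fun n => ∫⁻ x in Metric.ball (0 : E d) R, ‖g n x‖ₑ ^ 2) atTop (nhds 0) := by
  refine squeeze2 (b := fun k n => ∫⁻ x in Metric.ball (0 : E d) R, min (‖g n x‖ₑ ^ 2) ((k : ℝ≥0∞) ^ 2))
    (c := fun k => (k : ℝ≥0∞) ^ (-(p - 2)) * B) ?_ ?_ ?_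
  · filter_upwards [eventually_ge_atTop 1] with k hk n
    have hkt : (k : ℝ≥0∞) ^ (-(p - 2)) ≠ ⊤ := by
      simp only [ne_eq, ENNReal.rpow_eq_top_iff, not_or, not_and]
      constructor
      · intro h; simp at h; omega
      · intro h; simp at h
    calc _ ≤ ∫⁻ x in Metric.ball (0 : E d) R, (min (‖g n x‖ₑ ^ 2) ((k : ℝ≥0∞) ^ 2) +
          (k : ℝ≥0∞) ^ (-(p - 2)) * ‖g n x‖ₑ ^ p) :=
          lintegral_mono fun x => sq_le_trunc (by simp) hp _
      _ = _ + (k : ℝ≥0∞) ^ (-(p - 2)) * ∫⁻ x in Metric.ball (0 : E d) R, ‖g n x‖ₑ ^ p := by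
          rw [lintegral_add_left (by have := hg n; fun_prop), lintegral_const_mul' _ _ hkt]
      _ ≤ _ := by
          gcongr
          exact (setLIntegral_le_lintegral _ _).trans (hb n)
  · refine Eventually.of_forall fun k => ?_
    have : (0 : ℝ≥0∞) = ∫⁻ x in Metric.ball (0 : E d) R, 0 := by simp
    rw [this]
    refine tendsto_lintegral_of_dominated_convergence (fun _ => (k : ℝ≥0∞) ^ 2) ?_ ?_ ?_ ?_
    · intro n; have := hg n; fun_prop
    · intro n; exact Eventually.of_forall fun x => min_le_right _ _
    · simp only [lintegral_const]
      refine ENNReal.mul_ne_top (by simp) ?_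
      simpa using measure_ball_lt_top.ne
    · filter_upwards [ae_restrict_of_ae hae] with x hx
      have h1 : Tendsto (fun n => ‖g n x‖ₑ ^ 2) atTop (nhds 0) := by
        have := ((ENNReal.continuous_pow 2).tendsto _).comp hx.enorm
        simpa [Function.comp_def] using this
      exact tendsto_of_tendsto_of_tendsto_of_le_of_le tendsto_const_nhds h1
        (fun _ => zero_le) (fun _ => min_le_left _ _)
  · have := ENNReal.Tendsto.mul_const (b := B) (tendsto_natCast_rpow_neg (by linarith : 0 < p - 2)) (Or.inr hB)
    simpa using this

/-- indicator of a ball -/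
def ind {d : ℕ} (R : ℝ) : E d → ℝ≥0∞ := (Metric.ball (0 : E d) R).indicator (fun _ => 1)

@[fun_prop]
lemma meas_ind {d : ℕ} (R : ℝ) : Measurable (ind R : E d → ℝ≥0∞) :=
  measurable_const.indicator measurableSet_ball

lemma D_ind {d : ℕ} (s : ℝ) (u : E d → ℝ≥0∞) (R : ℝ) :
    D s u (ind R) = ∫⁻ x, u x * ∫⁻ y in Metric.ball (0 : E d) R, K s x y := by
  unfold D
  refine lintegral_congr fun x => ?_
  simp_rw [mul_assoc]
  have : ∀ y, ind R y * K s x y = (Metric.ball (0 : E d) R).indicator (fun y => K s x y) y := by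
    intro y; unfold ind
    by_cases hy : y ∈ Metric.ball (0 : E d) R
    · rw [Set.indicator_of_mem hy, Set.indicator_of_mem hy, one_mul]
    · rw [Set.indicator_of_notMem hy, Set.indicator_of_notMem hy, zero_mul]
  simp_rw [this]
  rw [lintegral_const_mul _ (Measurable.indicator (by fun_prop) measurableSet_ball),
    lintegral_indicator measurableSet_ball]

lemma pot_shift {d : ℕ} (s R : ℝ) (x : E d) :
    ∫⁻ y, (Metric.ball (0 : E d) R).indicator (fun w => ‖w‖ₑ ^ (-s)) (x - y) =
      ∫⁻ w in Metric.ball (0 : E d) R, ‖w‖ₑ ^ (-s) := by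
  rw [lintegral_sub_left_eq_self (fun w => (Metric.ball (0 : E d) R).indicator (fun w => ‖w‖ₑ ^ (-s)) w),
    lintegral_indicator measurableSet_ball]

lemma pot_bdd {d : ℕ} (hd : 1 ≤ d) {s : ℝ} (hs : 0 < s) (hsd : s < d) (R : ℝ) :
    ∃ C : ℝ≥0∞, C ≠ ⊤ ∧ ∀ x, ∫⁻ y in Metric.ball (0 : E d) R, K s x y ≤ C := by
  refine ⟨(∫⁻ w in Metric.ball (0 : E d) 1, ‖w‖ₑ ^ (-s)) + volume (Metric.ball (0 : E d) R),
    ENNReal.add_ne_top.2 ⟨(ball_fin hd hsd).ne, measure_ball_lt_top.ne⟩, fun x => ?_⟩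
  have h : ∀ y, K s x y ≤ (Metric.ball (0 : E d) 1).indicator (fun w => ‖w‖ₑ ^ (-s)) (x - y) + 1 := by
    intro y
    by_cases hy : x - y ∈ Metric.ball (0 : E d) 1
    · rw [Set.indicator_of_mem hy]; exact le_add_right le_rfl
    · refine le_add_left ?_
      unfold K
      calc _ ≤ (1:ℝ≥0∞) ^ (-s) := by
            apply rpow_neg_anti _ hs.le
            rw [← ofReal_norm]
            exact ENNReal.one_le_ofReal.2 (by simpa using hy)
        _ = 1 := by simp
  calc _ ≤ ∫⁻ y in Metric.ball (0 : E d) R,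
        ((Metric.ball (0 : E d) 1).indicator (fun w => ‖w‖ₑ ^ (-s)) (x - y) + 1) :=
        lintegral_mono h
    _ = (∫⁻ y in Metric.ball (0 : E d) R,
        (Metric.ball (0 : E d) 1).indicator (fun w => ‖w‖ₑ ^ (-s)) (x - y)) +
          volume (Metric.ball (0 : E d) R) := by
        rw [lintegral_add_right _ measurable_const]; simp
    _ ≤ _ := by
        refine add_le_add ?_ le_rfl
        rw [← pot_shift s 1 x]
        exact setLIntegral_le_lintegral _ _

lemma D_ind_ind {d : ℕ} (s : ℝ) (R : ℝ) :
    D s (ind R : E d → ℝ≥0∞) (ind R) ≤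
      volume (Metric.ball (0 : E d) R) * ∫⁻ w in Metric.ball (0 : E d) (2 * R), ‖w‖ₑ ^ (-s) := by
  rw [D_ind]
  have h : ∀ x : E d, ind R x * ∫⁻ y in Metric.ball (0 : E d) R, K s x y ≤
      ind R x * ∫⁻ w in Metric.ball (0 : E d) (2 * R), ‖w‖ₑ ^ (-s) := by
    intro x
    by_cases hx : x ∈ Metric.ball (0 : E d) R
    · refine mul_le_mul' le_rfl ?_
      rw [← pot_shift s (2 * R) x]
      refine le_trans (setLIntegral_mono' measurableSet_ball fun y hy => ?_)
        (setLIntegral_le_lintegral _ _)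
      have : x - y ∈ Metric.ball (0 : E d) (2 * R) := by
        simp only [Metric.mem_ball, dist_zero_right] at *
        linarith [norm_sub_le x y]
      rw [Set.indicator_of_mem this]; rfl
    · unfold ind; rw [Set.indicator_of_notMem hx]; simp
  refine (lintegral_mono h).trans ?_
  rw [lintegral_mul_const _ (meas_ind R)]
  unfold ind
  rw [lintegral_indicator measurableSet_ball]
  simp

lemma far_pt {d : ℕ} {s : ℝ} (hs : 0 < s) {ρ R : ℝ} (hR : 2 * ρ ≤ R) (x : E d)
    (hx : x ∉ Metric.ball (0 : E d) R) :
    volume (Metric.ball (0 : E d) R) * ∫⁻ y in Metric.ball (0 : E d) ρ, K s x y ≤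
      4 ^ s * volume (Metric.ball (0 : E d) ρ) * ∫⁻ z in Metric.ball (0 : E d) R, K s x z := by
  have hx' : R ≤ ‖x‖ := by simpa using hx
  have h : ∀ y ∈ Metric.ball (0 : E d) ρ, ∀ z ∈ Metric.ball (0 : E d) R,
      K s x y ≤ 4 ^ s * K s x z := by
    intro y hy z hz
    simp only [Metric.mem_ball, dist_zero_right] at hy hz
    have h1 : ‖x - z‖ ≤ 4 * ‖x - y‖ := by
      have a1 := norm_sub_le x z
      have a2 := norm_sub_norm_le x y
      linarith
    have h2 : ‖x - z‖ₑ ≤ 4 * ‖x - y‖ₑ := by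
      rw [← ofReal_norm, ← ofReal_norm]
      calc _ ≤ ENNReal.ofReal (4 * ‖x - y‖) := ENNReal.ofReal_le_ofReal h1
        _ = _ := by rw [ENNReal.ofReal_mul (by norm_num)]; simp
    unfold K
    have h40 : (4:ℝ≥0∞) ^ s ≠ 0 := by simp [ENNReal.rpow_eq_zero_iff]
    have h4t : (4:ℝ≥0∞) ^ s ≠ ⊤ := by simp [ENNReal.rpow_eq_top_iff]
    calc ‖x - y‖ₑ ^ (-s) = 4 ^ s * (4 * ‖x - y‖ₑ) ^ (-s) := by
          rw [ENNReal.mul_rpow_of_ne_top (by simp) (by simp), ← mul_assoc, ENNReal.rpow_neg 4,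
            ENNReal.mul_inv_cancel h40 h4t, one_mul]
      _ ≤ _ := mul_le_mul' le_rfl (rpow_neg_anti h2 hs.le)
  calc volume (Metric.ball (0 : E d) R) * ∫⁻ y in Metric.ball (0 : E d) ρ, K s x y
      = ∫⁻ z in Metric.ball (0 : E d) R, ∫⁻ y in Metric.ball (0 : E d) ρ, K s x y := by
        simp [mul_comm]
    _ ≤ ∫⁻ z in Metric.ball (0 : E d) R, ∫⁻ y in Metric.ball (0 : E d) ρ, 4 ^ s * K s x z := by
        refine setLIntegral_mono' measurableSet_ball fun z hz => ?_
        exact setLIntegral_mono' measurableSet_ball fun y hy => h y hy z hz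
    _ = ∫⁻ z in Metric.ball (0 : E d) R, 4 ^ s * volume (Metric.ball (0 : E d) ρ) * K s x z := by
        refine lintegral_congr fun z => ?_
        simp only [lintegral_const, Measure.restrict_apply MeasurableSet.univ, Set.univ_inter]
        ring
    _ = _ := by rw [lintegral_const_mul _ (by fun_prop)]

lemma Q_tendsto {d : ℕ} (hd : 1 ≤ d) {s : ℝ} (hs : 0 < s) (hsd : s < d) :
    Tendsto (fun k : ℕ => (volume (Metric.ball (0 : E d) k))⁻¹ *
      (D s (ind k : E d → ℝ≥0∞) (ind k)) ^ (1 / 2 : ℝ)) atTop (nhds 0) := by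
  have := nontrivial_E hd
  set V := (volume : Measure (E d)) (Metric.ball 0 1) with hV
  have hV0 : V ≠ 0 := (Metric.measure_ball_pos volume _ one_pos).ne'
  have hVt : V ≠ ⊤ := measure_ball_lt_top.ne
  set P := ∫⁻ w in Metric.ball (0 : E d) 1, ‖w‖ₑ ^ (-s) with hP
  have hPt : P ≠ ⊤ := (ball_fin hd hsd).ne
  set c := V⁻¹ * (V * (2 ^ ((d:ℝ) - s) * P)) ^ (1/2 : ℝ) with hc
  have hct : c ≠ ⊤ := by
    refine ENNReal.mul_ne_top (by simpa using hV0) (ENNReal.rpow_ne_top_of_nonneg (by norm_num) ?_)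
    exact ENNReal.mul_ne_top hVt (ENNReal.mul_ne_top
      (ENNReal.rpow_ne_top_of_nonneg (by linarith) (by simp)) hPt)
  have hlim : Tendsto (fun k : ℕ => (k : ℝ≥0∞) ^ (-(s / 2)) * c) atTop (nhds 0) := by
    have := ENNReal.Tendsto.mul_const (b := c)
      (tendsto_natCast_rpow_neg (by linarith : 0 < s / 2)) (Or.inr hct)
    simpa using this
  refine tendsto_of_tendsto_of_tendsto_of_le_of_le' tendsto_const_nhds hlim
    (Eventually.of_forall fun _ => zero_le) ?_
  filter_upwards [eventually_ge_atTop 1] with k hk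
  have hkpos : (0:ℝ) < k := by exact_mod_cast hk
  have hk0 : (k : ℝ≥0∞) ≠ 0 := by simp; omega
  have hkt : (k : ℝ≥0∞) ≠ ⊤ := by simp
  have hA : volume (Metric.ball (0 : E d) k) = (k : ℝ≥0∞) ^ (d : ℝ) * V := by
    rw [Measure.addHaar_ball _ _ hkpos.le, finrank_euclideanSpace_fin, ENNReal.ofReal_pow hkpos.le,
      ENNReal.rpow_natCast]
    simp [hV]
  have hPk : ∫⁻ w in Metric.ball (0 : E d) (2 * k), ‖w‖ₑ ^ (-s) =
      (k : ℝ≥0∞) ^ ((d : ℝ) - s) * (2 ^ ((d : ℝ) - s) * P) := by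
    rw [scale_ball (by positivity), ENNReal.ofReal_mul (by norm_num),
      ENNReal.mul_rpow_of_ne_top (by simp) (by simp)]
    simp only [ENNReal.ofReal_natCast, ENNReal.ofReal_ofNat]
    ring
  calc _ ≤ (volume (Metric.ball (0 : E d) k))⁻¹ * (volume (Metric.ball (0 : E d) k) *
        ∫⁻ w in Metric.ball (0 : E d) (2 * k), ‖w‖ₑ ^ (-s)) ^ (1 / 2 : ℝ) := by
        gcongr
        exact D_ind_ind s k
    _ = (k : ℝ≥0∞) ^ (-(s / 2)) * c := by
        rw [hA, hPk, hc, ENNReal.mul_inv (Or.inr hVt) (Or.inr hV0), ← ENNReal.rpow_neg]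
        have e1 : (k : ℝ≥0∞) ^ (d : ℝ) * V * ((k : ℝ≥0∞) ^ ((d : ℝ) - s) * (2 ^ ((d : ℝ) - s) * P)) =
          (k : ℝ≥0∞) ^ (d + ((d : ℝ) - s)) * (V * (2 ^ ((d : ℝ) - s) * P)) := by
          rw [ENNReal.rpow_add _ _ hk0 hkt]; ring
        rw [e1, ENNReal.mul_rpow_of_nonneg _ _ (by norm_num : (0:ℝ) ≤ 1/2), ← ENNReal.rpow_mul]
        have e2 : (k : ℝ≥0∞) ^ (-(s / 2)) = (k : ℝ≥0∞) ^ (-(d:ℝ)) *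
            (k : ℝ≥0∞) ^ ((d + ((d : ℝ) - s)) * (1 / 2)) := by
          rw [← ENNReal.rpow_add _ _ hk0 hkt]; congr 1; ring
        rw [e2]; ring

lemma cross_ind {d : ℕ} (hd : 1 ≤ d) {s : ℝ} (hs : 0 < s) (hsd : s < d)
    (u : ℕ → E d → ℝ≥0∞) (hu : ∀ n, Measurable (u n)) {M : ℝ≥0∞} (hM : M ≠ ⊤)
    (hD : ∀ n, D s (u n) (u n) ≤ M)
    (hnear : ∀ R : ℝ, Tendsto (fun n => ∫⁻ x in Metric.ball (0 : E d) R, u n x) atTop (nhds 0))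
    (ρ : ℝ) : Tendsto (fun n => D s (u n) (ind ρ)) atTop (nhds 0) := by
  have := nontrivial_E hd
  obtain ⟨C, hC, hCS⟩ := D_cs hd hs hsd
  obtain ⟨c, hc, hpot⟩ := pot_bdd hd hs hsd ρ
  have hbt : 4 ^ s * volume (Metric.ball (0 : E d) ρ) * (C * M ^ (1 / 2 : ℝ)) ≠ ⊤ :=
    ENNReal.mul_ne_top (ENNReal.mul_ne_top (ENNReal.rpow_ne_top_of_nonneg hs.le (by simp))
      measure_ball_lt_top.ne) (ENNReal.mul_ne_top hC (ENNReal.rpow_ne_top_of_nonneg (by norm_num) hM))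
  refine squeeze2 (b := fun k n => (∫⁻ x in Metric.ball (0 : E d) k, u n x) * c)
    (c := fun k => 4 ^ s * volume (Metric.ball (0 : E d) ρ) * (C * M ^ (1 / 2 : ℝ)) *
      ((volume (Metric.ball (0 : E d) k))⁻¹ * (D s (ind k : E d → ℝ≥0∞) (ind k)) ^ (1 / 2 : ℝ))) ?_ ?_ ?_
  · filter_upwards [eventually_ge_atTop (max 1 ⌈2 * ρ⌉₊)] with k hk n
    have hk1 : 1 ≤ k := (le_max_left _ _).trans hk
    have hkρ : 2 * ρ ≤ k := (Nat.le_ceil _).trans (by exact_mod_cast (le_max_right _ _).trans hk)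
    set A := volume (Metric.ball (0 : E d) k) with hA
    have hA0 : A ≠ 0 := (Metric.measure_ball_pos volume _ (by exact_mod_cast hk1)).ne'
    have hAt : A ≠ ⊤ := measure_ball_lt_top.ne
    rw [D_ind, ← lintegral_add_compl _ (measurableSet_ball (x := (0 : E d)) (ε := (k:ℝ)))]
    refine add_le_add ?_ ?_
    · rw [← lintegral_mul_const _ (hu n)]
      exact lintegral_mono fun x => mul_le_mul' le_rfl (hpot x)
    · calc _ ≤ ∫⁻ x in (Metric.ball (0 : E d) k)ᶜ, (A⁻¹ * (4 ^ s * volume (Metric.ball (0 : E d) ρ))) *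
            (u n x * ∫⁻ z in Metric.ball (0 : E d) k, K s x z) := by
            refine setLIntegral_mono' measurableSet_ball.compl fun x hx => ?_
            have := far_pt hs hkρ x hx
            calc _ = u n x * (A⁻¹ * (A * ∫⁻ y in Metric.ball (0 : E d) ρ, K s x y)) := by
                  rw [← mul_assoc A⁻¹, ENNReal.inv_mul_cancel hA0 hAt, one_mul]
              _ ≤ u n x * (A⁻¹ * (4 ^ s * volume (Metric.ball (0 : E d) ρ) *
                    ∫⁻ z in Metric.ball (0 : E d) k, K s x z)) := by gcongr
              _ = _ := by ring
        _ ≤ ∫⁻ x, (A⁻¹ * (4 ^ s * volume (Metric.ball (0 : E d) ρ))) *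
            (u n x * ∫⁻ z in Metric.ball (0 : E d) k, K s x z) := setLIntegral_le_lintegral _ _
        _ = (A⁻¹ * (4 ^ s * volume (Metric.ball (0 : E d) ρ))) * D s (u n) (ind k) := by
            rw [D_ind, lintegral_const_mul']
            exact ENNReal.mul_ne_top (by simpa using hA0) (ENNReal.mul_ne_top
              (ENNReal.rpow_ne_top_of_nonneg hs.le (by simp)) measure_ball_lt_top.ne)
        _ ≤ (A⁻¹ * (4 ^ s * volume (Metric.ball (0 : E d) ρ))) *
            (C * (M ^ (1/2:ℝ) * D s (ind k : E d → ℝ≥0∞) (ind k) ^ (1/2:ℝ))) := by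
            gcongr
            refine (hCS _ _ (hu n) (meas_ind _)).trans ?_
            gcongr
            exact hD n
        _ = _ := by ring
  · refine Eventually.of_forall fun k => ?_
    simpa using ENNReal.Tendsto.mul_const (b := c) (hnear k) (Or.inr hc)
  · simpa using ENNReal.Tendsto.const_mul (Q_tendsto hd hs hsd) (Or.inr hbt)

lemma D_prod {d : ℕ} (s : ℝ) {u v : E d → ℝ≥0∞} (hu : Measurable u) (hv : Measurable v) :
    D s u v = ∫⁻ q : E d × E d, u q.1 * v q.2 * K s q.1 q.2 ∂(volume.prod volume) := by
  rw [lintegral_prod _ (Measurable.aemeasurable (by fun_prop))]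
  rfl

lemma D_symm {d : ℕ} (s : ℝ) {u v : E d → ℝ≥0∞} (hu : Measurable u) (hv : Measurable v) :
    D s u v = D s v u := by
  unfold D
  rw [lintegral_lintegral_swap (Measurable.aemeasurable (by unfold Function.uncurry; fun_prop))]
  refine lintegral_congr fun x => lintegral_congr fun y => ?_
  rw [K_symm]; ring

lemma cross {d : ℕ} (hd : 1 ≤ d) {s : ℝ} (hs : 0 < s) (hsd : s < d)
    (u : ℕ → E d → ℝ≥0∞) (hu : ∀ n, Measurable (u n)) {M : ℝ≥0∞} (hM : M ≠ ⊤)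
    (hD : ∀ n, D s (u n) (u n) ≤ M)
    (hnear : ∀ R : ℝ, Tendsto (fun n => ∫⁻ x in Metric.ball (0 : E d) R, u n x) atTop (nhds 0))
    (v : E d → ℝ≥0∞) (hv : Measurable v) (hvt : ∀ x, v x ≠ ⊤) (hDv : D s v v ≠ ⊤) :
    Tendsto (fun n => D s (u n) v) atTop (nhds 0) := by
  obtain ⟨C, hC, hCS⟩ := D_cs hd hs hsd
  let S : ℕ → Set (E d) := fun k => {x | v x ≤ k} ∩ Metric.ball 0 k
  have hS : ∀ k, MeasurableSet (S k) := fun k =>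
    (measurableSet_le hv measurable_const).inter measurableSet_ball
  let w : ℕ → E d → ℝ≥0∞ := fun k => (S k)ᶜ.indicator v
  have hw : ∀ k, Measurable (w k) := fun k => hv.indicator (hS k).compl
  have hwv : ∀ k x, w k x ≤ v x := fun k x => Set.indicator_le_self _ _ _
  have hev : ∀ x, ∀ᶠ k in atTop, w k x = 0 := by
    intro x
    obtain ⟨k1, hk1⟩ := ENNReal.exists_nat_gt (hvt x)
    obtain ⟨k2, hk2⟩ := exists_nat_gt ‖x‖
    filter_upwards [eventually_ge_atTop (max k1 k2)] with k hk
    have hmem : x ∈ S k := by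
      refine ⟨?_, ?_⟩
      · exact hk1.le.trans (by exact_mod_cast (le_max_left _ _).trans hk)
      · have : (k2 : ℝ) ≤ k := by exact_mod_cast (le_max_right _ _).trans hk
        simp only [Metric.mem_ball, dist_zero_right]
        linarith
    exact Set.indicator_of_notMem (Set.notMem_compl_iff.2 hmem) _
  have hle : ∀ (k : ℕ) x, v x ≤ (k : ℝ≥0∞) * ind (k : ℝ) x + w k x := by
    intro k x
    by_cases hx : x ∈ S k
    · refine le_add_right ?_
      unfold ind; rw [Set.indicator_of_mem hx.2, mul_one]; exact hx.1
    · refine le_add_left ?_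
      simp only [w]
      rw [Set.indicator_of_mem (show x ∈ (S k)ᶜ from hx)]
  have hDw : Tendsto (fun k => D s (w k) (w k)) atTop (nhds 0) := by
    have h0 : (0 : ℝ≥0∞) = ∫⁻ q : E d × E d, 0 ∂(volume.prod volume) := by simp
    simp_rw [fun k => D_prod s (hw k) (hw k)]
    rw [h0]
    refine tendsto_lintegral_of_dominated_convergence
      (fun q : E d × E d => v q.1 * v q.2 * K s q.1 q.2) ?_ ?_ ?_ ?_
    · intro k; have := hw k; fun_prop
    · intro k
      refine Eventually.of_forall fun q => ?_
      exact mul_le_mul' (mul_le_mul' (hwv _ _) (hwv _ _)) le_rfl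
    · rw [← D_prod s hv hv]; exact hDv
    · refine Eventually.of_forall fun q => ?_
      refine tendsto_const_nhds.congr' ?_
      filter_upwards [hev q.1] with k hk
      simp [hk]
  have hct : C * M ^ (1/2:ℝ) ≠ ⊤ :=
    ENNReal.mul_ne_top hC (ENNReal.rpow_ne_top_of_nonneg (by norm_num) hM)
  refine squeeze2 (b := fun k n => k * D s (u n) (ind k))
    (c := fun k => C * M ^ (1/2:ℝ) * D s (w k) (w k) ^ (1/2:ℝ)) ?_ ?_ ?_
  · refine Eventually.of_forall fun k n => ?_
    have hun := hu n
    have hwk := hw k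
    calc D s (u n) v ≤ k * D s (u n) (ind k) + D s (u n) (w k) := by
          rw [D_prod s hun hv, D_prod s hun (meas_ind _), D_prod s hun hwk,
            ← lintegral_const_mul _ (by fun_prop), ← lintegral_add_left (by fun_prop)]
          refine lintegral_mono fun q => ?_
          calc u n q.1 * v q.2 * K s q.1 q.2
              ≤ u n q.1 * (k * ind k q.2 + w k q.2) * K s q.1 q.2 := by
                gcongr; exact hle k q.2
            _ = _ := by ring
      _ ≤ _ := by
          refine add_le_add le_rfl ?_
          refine (hCS _ _ hun hwk).trans ?_
          rw [mul_assoc]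
          gcongr
          exact hD n
  · refine Eventually.of_forall fun k => ?_
    simpa using ENNReal.Tendsto.const_mul (a := (k : ℝ≥0∞))
      (cross_ind hd hs hsd u hu hM hD hnear k) (Or.inr (by simp))
  · have h1 := ((ENNReal.continuous_rpow_const (y := (1/2:ℝ))).tendsto 0).comp hDw
    rw [ENNReal.zero_rpow_of_pos (by norm_num)] at h1
    simpa using ENNReal.Tendsto.const_mul h1 (Or.inr hct)

lemma riesz_eq {d : ℕ} (hd : 1 ≤ d) (lam : ℝ) (g : E d → ℂ) :
    rieszEnergy d lam g = D lam (fun x => ‖g x‖ₑ ^ 2) (fun x => ‖g x‖ₑ ^ 2) := by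
  unfold rieszEnergy D
  refine lintegral_congr fun x => lintegral_congr_ae ?_
  filter_upwards [ae_ne' hd x] with y hy
  have hpos : 0 < ‖x - y‖ := norm_pos_iff.2 (sub_ne_zero.2 hy)
  unfold K
  rw [← ofReal_norm (x - y), ENNReal.ofReal_rpow_of_pos hpos]
  rfl

lemma pt_e {s u v : ℝ} (hs : 0 ≤ s) (hu : 0 ≤ u) (hv : 0 ≤ v) (h1 : s ≤ u + v) (h2 : u ≤ s + v)
    (h3 : v ≤ s + u) : |s ^ 2 - u ^ 2 - v ^ 2| ≤ 2 * (u * v) := by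
  rw [abs_le]
  constructor
  · rcases le_total u v with h | h <;> nlinarith
  · nlinarith

lemma pt_real {s u v s' u' v' t : ℝ} (hs : 0 ≤ s) (hu : 0 ≤ u) (hv : 0 ≤ v)
    (hs' : 0 ≤ s') (hu' : 0 ≤ u') (hv' : 0 ≤ v') (ht : 0 < t)
    (h1 : s ≤ u + v) (h2 : u ≤ s + v) (h3 : v ≤ s + u)
    (h1' : s' ≤ u' + v') (h2' : u' ≤ s' + v') (h3' : v' ≤ s' + u') :
    |s ^ 2 * s' ^ 2 - u ^ 2 * u' ^ 2 - v ^ 2 * v' ^ 2| ≤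
      2 * t * (u ^ 2 * u' ^ 2 + v ^ 2 * v' ^ 2) +
        (3 + 2 * t⁻¹) * (u ^ 2 * v' ^ 2 + v ^ 2 * u' ^ 2) := by
  have he := pt_e hs hu hv h1 h2 h3
  have he' := pt_e hs' hu' hv' h1' h2' h3'
  set e := s ^ 2 - u ^ 2 - v ^ 2 with hE
  set e' := s' ^ 2 - u' ^ 2 - v' ^ 2 with hE'
  have hs2 : s ^ 2 = u ^ 2 + v ^ 2 + e := by rw [hE]; ring
  have hs2' : s' ^ 2 = u' ^ 2 + v' ^ 2 + e' := by rw [hE']; ring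
  have hid : s ^ 2 * s' ^ 2 - u ^ 2 * u' ^ 2 - v ^ 2 * v' ^ 2 =
      (u ^ 2 * v' ^ 2 + v ^ 2 * u' ^ 2) + (e * (u' ^ 2 + v' ^ 2) + e' * (u ^ 2 + v ^ 2) + e * e') := by
    rw [hs2, hs2']; ring
  have yng : ∀ a b : ℝ, 2 * (a * b) ≤ t * a ^ 2 + t⁻¹ * b ^ 2 := by
    intro a b
    have : t * a ^ 2 + t⁻¹ * b ^ 2 - 2 * (a * b) = t⁻¹ * (t * a - b) ^ 2 := by
      field_simp; ring
    have : 0 ≤ t⁻¹ * (t * a - b) ^ 2 := by positivity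
    linarith
  have b1 : |e * (u' ^ 2 + v' ^ 2)| ≤ 2 * (u * v) * (u' ^ 2 + v' ^ 2) := by
    rw [abs_mul, abs_of_nonneg (by positivity : 0 ≤ u' ^ 2 + v' ^ 2)]; gcongr
  have b2 : |e' * (u ^ 2 + v ^ 2)| ≤ 2 * (u' * v') * (u ^ 2 + v ^ 2) := by
    rw [abs_mul, abs_of_nonneg (by positivity : 0 ≤ u ^ 2 + v ^ 2)]; gcongr
  have b3 : |e * e'| ≤ 2 * (u * v) * (2 * (u' * v')) := by
    rw [abs_mul]; gcongr
  have b4 : |s ^ 2 * s' ^ 2 - u ^ 2 * u' ^ 2 - v ^ 2 * v' ^ 2| ≤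
      (u ^ 2 * v' ^ 2 + v ^ 2 * u' ^ 2) + (2 * (u * v) * (u' ^ 2 + v' ^ 2) +
        2 * (u' * v') * (u ^ 2 + v ^ 2) + 2 * (u * v) * (2 * (u' * v'))) := by
    rw [hid]
    refine (abs_add_le _ _).trans ?_
    rw [abs_of_nonneg (by positivity : 0 ≤ u ^ 2 * v' ^ 2 + v ^ 2 * u' ^ 2)]
    have := abs_add_three (e * (u' ^ 2 + v' ^ 2)) (e' * (u ^ 2 + v ^ 2)) (e * e')
    linarith
  have y1 := yng (u * u') (v * u')
  have y2 := yng (v * v') (u * v')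
  have y3 := yng (u * u') (u * v')
  have y4 := yng (v * v') (v * u')
  have y5 := sq_nonneg (u * v' - v * u')
  nlinarith [b4, y1, y2, y3, y4, y5]

lemma pt_enn (a b c a' b' c' : ℂ) (h : a = b + c) (h' : a' = b' + c') {t : NNReal} (ht : 0 < t)
    (k : ℝ≥0∞) :
    ‖a‖ₑ ^ 2 * ‖a'‖ₑ ^ 2 * k ≤ ‖b‖ₑ ^ 2 * ‖b'‖ₑ ^ 2 * k + ‖c‖ₑ ^ 2 * ‖c'‖ₑ ^ 2 * k +
      (2 * t * (‖b‖ₑ ^ 2 * ‖b'‖ₑ ^ 2 * k + ‖c‖ₑ ^ 2 * ‖c'‖ₑ ^ 2 * k) +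
        ((3 + 2 * t⁻¹ : NNReal) : ℝ≥0∞) * (‖b‖ₑ ^ 2 * ‖c'‖ₑ ^ 2 * k + ‖c‖ₑ ^ 2 * ‖b'‖ₑ ^ 2 * k)) ∧
    ‖b‖ₑ ^ 2 * ‖b'‖ₑ ^ 2 * k + ‖c‖ₑ ^ 2 * ‖c'‖ₑ ^ 2 * k ≤ ‖a‖ₑ ^ 2 * ‖a'‖ₑ ^ 2 * k +
      (2 * t * (‖b‖ₑ ^ 2 * ‖b'‖ₑ ^ 2 * k + ‖c‖ₑ ^ 2 * ‖c'‖ₑ ^ 2 * k) +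
        ((3 + 2 * t⁻¹ : NNReal) : ℝ≥0∞) * (‖b‖ₑ ^ 2 * ‖c'‖ₑ ^ 2 * k + ‖c‖ₑ ^ 2 * ‖b'‖ₑ ^ 2 * k)) := by
  have tri : ∀ a b c : ℂ, a = b + c → ‖a‖ ≤ ‖b‖ + ‖c‖ ∧ ‖b‖ ≤ ‖a‖ + ‖c‖ ∧ ‖c‖ ≤ ‖a‖ + ‖b‖ := by
    intro a b c h
    refine ⟨h ▸ norm_add_le _ _, ?_, ?_⟩
    · have : b = a - c := by rw [h]; ring
      rw [this]; exact norm_sub_le _ _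
    · have : c = a - b := by rw [h]; ring
      rw [this]; exact norm_sub_le _ _
  obtain ⟨h1, h2, h3⟩ := tri a b c h
  obtain ⟨h1', h2', h3'⟩ := tri a' b' c' h'
  have key := pt_real (norm_nonneg a) (norm_nonneg b) (norm_nonneg c) (norm_nonneg a')
    (norm_nonneg b') (norm_nonneg c') (show (0:ℝ) < t from ht) h1 h2 h3 h1' h2' h3'
  rw [abs_le] at key
  obtain ⟨k1, k2⟩ := key
  have n1 : ‖a‖₊ ^ 2 * ‖a'‖₊ ^ 2 ≤ ‖b‖₊ ^ 2 * ‖b'‖₊ ^ 2 + ‖c‖₊ ^ 2 * ‖c'‖₊ ^ 2 +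
      (2 * t * (‖b‖₊ ^ 2 * ‖b'‖₊ ^ 2 + ‖c‖₊ ^ 2 * ‖c'‖₊ ^ 2) +
        (3 + 2 * t⁻¹) * (‖b‖₊ ^ 2 * ‖c'‖₊ ^ 2 + ‖c‖₊ ^ 2 * ‖b'‖₊ ^ 2)) := by
    rw [← NNReal.coe_le_coe]; push_cast; linarith
  have n2 : ‖b‖₊ ^ 2 * ‖b'‖₊ ^ 2 + ‖c‖₊ ^ 2 * ‖c'‖₊ ^ 2 ≤ ‖a‖₊ ^ 2 * ‖a'‖₊ ^ 2 +
      (2 * t * (‖b‖₊ ^ 2 * ‖b'‖₊ ^ 2 + ‖c‖₊ ^ 2 * ‖c'‖₊ ^ 2) +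
        (3 + 2 * t⁻¹) * (‖b‖₊ ^ 2 * ‖c'‖₊ ^ 2 + ‖c‖₊ ^ 2 * ‖b'‖₊ ^ 2)) := by
    rw [← NNReal.coe_le_coe]; push_cast; linarith
  set r := (3 + 2 * t⁻¹ : NNReal)
  have m1 := mul_le_mul_left (ENNReal.coe_le_coe.2 n1) k
  have m2 := mul_le_mul_left (ENNReal.coe_le_coe.2 n2) k
  push_cast at m1 m2
  simp only [enorm_eq_nnnorm]
  constructor
  · calc _ ≤ _ := m1
      _ = _ := by ring
  · calc _ = _ := by ring
      _ ≤ _ := m2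
      _ = _ := by ring

end RieszBL

/-- Non-local Brézis–Lieb lemma for the Riesz energy: if `f_n → f` a.e., the Riesz energies
`I_λ(f_n)` are uniformly bounded and the `L^p` norms of `f_n` are uniformly bounded
(`2 < p < ∞`), then `I_λ(f_n) = I_λ(f) + I_λ(f_n - f) + o(1)`. -/
theorem nonlocal_brezis_lieb
    (d : ℕ) (hd : 1 ≤ d) (lam p : ℝ) (hlam₀ : 0 < lam) (hlam₁ : lam < d)
    (hp₁ : 2 < p)
    (f : ℕ → EuclideanSpace ℝ (Fin d) → ℂ) (f₀ : EuclideanSpace ℝ (Fin d) → ℂ)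
    (hmeas : ∀ n, Measurable (f n)) (hmeas₀ : Measurable f₀)
    (hae : ∀ᵐ x : EuclideanSpace ℝ (Fin d), Tendsto (fun n => f n x) atTop (nhds (f₀ x)))
    (hriesz : ∃ M : ℝ≥0∞, M < ⊤ ∧ ∀ n, rieszEnergy d lam (f n) ≤ M)
    (hLp : ∃ B : ℝ≥0∞, B < ⊤ ∧ ∀ n, eLpNorm (f n) (ENNReal.ofReal p) volume ≤ B) :
    Tendsto (fun n => (rieszEnergy d lam (f n)).toReal
        - (rieszEnergy d lam (fun x => f n x - f₀ x)).toReal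
        - (rieszEnergy d lam f₀).toReal) atTop (nhds 0) := by
  obtain ⟨M, hM, hMn⟩ := hriesz
  obtain ⟨B, hB, hBn⟩ := hLp
  let g : ℕ → RieszBL.E d → ℂ := fun n x => f n x - f₀ x
  have hg : ∀ n, Measurable (g n) := fun n => (hmeas n).sub hmeas₀
  let S : ℕ → RieszBL.E d → ℝ≥0∞ := fun n x => ‖f n x‖ₑ ^ 2
  let U : ℕ → RieszBL.E d → ℝ≥0∞ := fun n x => ‖g n x‖ₑ ^ 2
  let V : RieszBL.E d → ℝ≥0∞ := fun x => ‖f₀ x‖ₑ ^ 2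
  have hS : ∀ n, Measurable (S n) := fun n => (hmeas n).enorm.pow_const 2
  have hU : ∀ n, Measurable (U n) := fun n => (hg n).enorm.pow_const 2
  have hV : Measurable V := hmeas₀.enorm.pow_const 2
  have eS : ∀ n, rieszEnergy d lam (f n) = RieszBL.D lam (S n) (S n) :=
    fun n => RieszBL.riesz_eq hd lam (f n)
  have eU : ∀ n, rieszEnergy d lam (fun x => f n x - f₀ x) = RieszBL.D lam (U n) (U n) :=
    fun n => RieszBL.riesz_eq hd lam (g n)
  have eV : rieszEnergy d lam f₀ = RieszBL.D lam V V := RieszBL.riesz_eq hd lam f₀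
  simp_rw [eS, eU, eV]
  have hDS : ∀ n, RieszBL.D lam (S n) (S n) ≤ M := fun n => eS n ▸ hMn n
  -- Fatou
  have hDV : RieszBL.D lam V V ≤ M := by
    rw [RieszBL.D_prod lam hV hV]
    have hae1 : ∀ᵐ q : RieszBL.E d × RieszBL.E d ∂(volume.prod volume),
        Tendsto (fun n => f n q.1) atTop (nhds (f₀ q.1)) :=
      Measure.quasiMeasurePreserving_fst.ae hae
    have hae2 : ∀ᵐ q : RieszBL.E d × RieszBL.E d ∂(volume.prod volume),
        Tendsto (fun n => f n q.2) atTop (nhds (f₀ q.2)) :=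
      Measure.quasiMeasurePreserving_snd.ae hae
    have hpt : ∀ᵐ q : RieszBL.E d × RieszBL.E d ∂(volume.prod volume),
        V q.1 * V q.2 * RieszBL.K lam q.1 q.2 ≤
          liminf (fun n => S n q.1 * S n q.2 * RieszBL.K lam q.1 q.2) atTop := by
      have hne : ∀ᵐ q : RieszBL.E d × RieszBL.E d ∂(volume.prod volume), q.1 ≠ q.2 := by
        rw [Measure.ae_prod_iff_ae_ae]
        · exact Eventually.of_forall fun x => RieszBL.ae_ne' hd x
        · exact (measurableSet_eq_fun measurable_fst measurable_snd).compl
      filter_upwards [hae1, hae2, hne] with q h1 h2 h3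
      have hs1 : Tendsto (fun n => S n q.1) atTop (nhds (V q.1)) :=
        ((ENNReal.continuous_pow 2).tendsto _).comp h1.enorm
      have hs2 : Tendsto (fun n => S n q.2) atTop (nhds (V q.2)) :=
        ((ENNReal.continuous_pow 2).tendsto _).comp h2.enorm
      have hVt : ∀ x, V x ≠ ⊤ := fun x => by simp [V]
      have hKt : RieszBL.K lam q.1 q.2 ≠ ⊤ := by
        unfold RieszBL.K
        have : ‖q.1 - q.2‖ₑ ≠ 0 := by simpa [sub_eq_zero] using h3
        simp [ENNReal.rpow_eq_top_iff, sub_eq_zero, h3]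
      have h12 := ENNReal.Tendsto.mul hs1 (Or.inr (hVt _)) hs2 (Or.inr (hVt _))
      have := ENNReal.Tendsto.mul_const (b := RieszBL.K lam q.1 q.2) h12 (Or.inr hKt)
      exact this.liminf_eq.ge
    calc _ ≤ ∫⁻ q : RieszBL.E d × RieszBL.E d,
          liminf (fun n => S n q.1 * S n q.2 * RieszBL.K lam q.1 q.2) atTop ∂(volume.prod volume) :=
          lintegral_mono_ae hpt
      _ ≤ liminf (fun n => ∫⁻ q : RieszBL.E d × RieszBL.E d,
          S n q.1 * S n q.2 * RieszBL.K lam q.1 q.2 ∂(volume.prod volume)) atTop :=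
          lintegral_liminf_le fun n => by have := hS n; fun_prop
      _ ≤ liminf (fun _ : ℕ => M) atTop := by
          refine liminf_le_liminf (Eventually.of_forall fun n => ?_)
          rw [← RieszBL.D_prod lam (hS n) (hS n)]
          exact hDS n
      _ = M := by simp
  obtain ⟨C, hC, hCS⟩ := RieszBL.D_cs hd hlam₀ hlam₁
  -- uniform energy bound for the differences
  let M1 : ℝ≥0∞ := 4 * (M + C * (M ^ (1/2:ℝ) * M ^ (1/2:ℝ)) + C * (M ^ (1/2:ℝ) * M ^ (1/2:ℝ)) + M)
  have hM1 : M1 ≠ ⊤ := by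
    have h1 : M ^ (1/2:ℝ) ≠ ⊤ := ENNReal.rpow_ne_top_of_nonneg (by norm_num) hM.ne
    have h2 : C * (M ^ (1/2:ℝ) * M ^ (1/2:ℝ)) ≠ ⊤ := ENNReal.mul_ne_top hC (ENNReal.mul_ne_top h1 h1)
    exact ENNReal.mul_ne_top (by simp) (ENNReal.add_ne_top.2 ⟨ENNReal.add_ne_top.2
      ⟨ENNReal.add_ne_top.2 ⟨hM.ne, h2⟩, h2⟩, hM.ne⟩)
  have hUle : ∀ n x, U n x ≤ 2 * (S n x + V x) := by
    intro n x
    have h1 : ‖g n x‖ ≤ ‖f n x‖ + ‖f₀ x‖ := norm_sub_le _ _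
    have h2 : ‖g n x‖₊ ^ 2 ≤ 2 * (‖f n x‖₊ ^ 2 + ‖f₀ x‖₊ ^ 2) := by
      rw [← NNReal.coe_le_coe]; push_cast
      nlinarith [norm_nonneg (g n x), norm_nonneg (f n x), norm_nonneg (f₀ x),
        sq_nonneg (‖f n x‖ - ‖f₀ x‖)]
    simp only [U, S, V, enorm_eq_nnnorm]
    exact_mod_cast h2
  have hDU : ∀ n, RieszBL.D lam (U n) (U n) ≤ M1 := by
    intro n
    have hSn := hS n
    have hUn := hU n
    calc RieszBL.D lam (U n) (U n) ≤ 4 * (RieszBL.D lam (S n) (S n) + RieszBL.D lam (S n) V +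
          RieszBL.D lam V (S n) + RieszBL.D lam V V) := by
          rw [RieszBL.D_prod lam hUn hUn, RieszBL.D_prod lam hSn hSn, RieszBL.D_prod lam hSn hV,
            RieszBL.D_prod lam hV hSn, RieszBL.D_prod lam hV hV,
            ← lintegral_add_left (by fun_prop), ← lintegral_add_left (by fun_prop),
            ← lintegral_add_left (by fun_prop), ← lintegral_const_mul _ (by fun_prop)]
          refine lintegral_mono fun q => ?_
          calc U n q.1 * U n q.2 * RieszBL.K lam q.1 q.2 ≤
              (2 * (S n q.1 + V q.1)) * (2 * (S n q.2 + V q.2)) * RieszBL.K lam q.1 q.2 :=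
                mul_le_mul' (mul_le_mul' (hUle n _) (hUle n _)) le_rfl
            _ = _ := by ring
      _ ≤ M1 := by
          refine mul_le_mul' le_rfl (add_le_add (add_le_add (add_le_add (hDS n) ?_) ?_) hDV)
          · refine (hCS _ _ hSn hV).trans ?_
            gcongr
            exact hDS n
          · refine (hCS _ _ hV hSn).trans ?_
            gcongr
            exact hDS n
  -- uniform bound in L^p of the differences
  have hp0 : ENNReal.ofReal p ≠ 0 := by simp; linarith
  have hpt : ENNReal.ofReal p ≠ ⊤ := by simp
  have hpr : (ENNReal.ofReal p).toReal = p := ENNReal.toReal_ofReal (by linarith)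
  have hp1 : 1 ≤ ENNReal.ofReal p := ENNReal.one_le_ofReal.2 (by linarith)
  have hf₀B : eLpNorm f₀ (ENNReal.ofReal p) volume ≤ B := by
    refine (Lp.eLpNorm_lim_le_liminf_eLpNorm (fun n => (hmeas n).aestronglyMeasurable) f₀ hae).trans ?_
    calc _ ≤ liminf (fun _ : ℕ => B) atTop := liminf_le_liminf (Eventually.of_forall hBn)
      _ = B := by simp
  have hgB : ∀ n, ∫⁻ x, ‖g n x‖ₑ ^ p ≤ (B + B) ^ p := by
    intro n
    have h1 : eLpNorm (g n) (ENNReal.ofReal p) volume ≤ B + B :=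
      (eLpNorm_sub_le (hmeas n).aestronglyMeasurable hmeas₀.aestronglyMeasurable hp1).trans
        (add_le_add (hBn n) hf₀B)
    rw [eLpNorm_eq_lintegral_rpow_enorm_toReal hp0 hpt, hpr] at h1
    have h2 := ENNReal.rpow_le_rpow h1 (by linarith : 0 ≤ p)
    rwa [← ENNReal.rpow_mul, one_div_mul_cancel (by linarith), ENNReal.rpow_one] at h2
  have hgae : ∀ᵐ x, Tendsto (fun n => g n x) atTop (nhds 0) := by
    filter_upwards [hae] with x hx
    simpa using hx.sub_const (f₀ x)
  have hnear := RieszBL.near_tendsto hp₁ g hg hgae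
    (ENNReal.rpow_ne_top_of_nonneg (by linarith : 0 ≤ p) (ENNReal.add_ne_top.2 ⟨hB.ne, hB.ne⟩)) hgB
  have hcross : Tendsto (fun n => RieszBL.D lam (U n) V) atTop (nhds 0) :=
    RieszBL.cross hd hlam₀ hlam₁ U hU hM1 hDU hnear V hV (fun x => by simp [V])
      (hDV.trans_lt hM).ne
  -- error bounds
  let r : NNReal → NNReal := fun t => 3 + 2 * t⁻¹
  have herr : ∀ (t : NNReal), 0 < t → ∀ n,
      RieszBL.D lam (S n) (S n) ≤ RieszBL.D lam (U n) (U n) + RieszBL.D lam V V +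
        (2 * t * (M1 + M) + (r t : ℝ≥0∞) * (2 * RieszBL.D lam (U n) V)) ∧
      RieszBL.D lam (U n) (U n) + RieszBL.D lam V V ≤ RieszBL.D lam (S n) (S n) +
        (2 * t * (M1 + M) + (r t : ℝ≥0∞) * (2 * RieszBL.D lam (U n) V)) := by
    intro t ht n
    have hSn := hS n
    have hUn := hU n
    have hE : 2 * (t : ℝ≥0∞) * (RieszBL.D lam (U n) (U n) + RieszBL.D lam V V) +
        (r t : ℝ≥0∞) * (RieszBL.D lam (U n) V + RieszBL.D lam V (U n)) ≤
        2 * t * (M1 + M) + (r t : ℝ≥0∞) * (2 * RieszBL.D lam (U n) V) := by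
      rw [RieszBL.D_symm lam hV hUn, ← two_mul (RieszBL.D lam (U n) V)]
      gcongr
      exact hDU n
    have hpe := fun q : RieszBL.E d × RieszBL.E d =>
      RieszBL.pt_enn (f n q.1) (g n q.1) (f₀ q.1) (f n q.2) (g n q.2) (f₀ q.2)
        (by simp [g]) (by simp [g]) ht (RieszBL.K lam q.1 q.2)
    have hid : 2 * (t : ℝ≥0∞) * (RieszBL.D lam (U n) (U n) + RieszBL.D lam V V) +
        (r t : ℝ≥0∞) * (RieszBL.D lam (U n) V + RieszBL.D lam V (U n)) =
        ∫⁻ q : RieszBL.E d × RieszBL.E d,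
          (2 * t * (U n q.1 * U n q.2 * RieszBL.K lam q.1 q.2 + V q.1 * V q.2 * RieszBL.K lam q.1 q.2) +
          (r t : ℝ≥0∞) * (U n q.1 * V q.2 * RieszBL.K lam q.1 q.2 +
            V q.1 * U n q.2 * RieszBL.K lam q.1 q.2)) ∂(volume.prod volume) := by
      rw [lintegral_add_left (by fun_prop), lintegral_const_mul _ (by fun_prop),
        lintegral_const_mul _ (by fun_prop), lintegral_add_left (by fun_prop),
        lintegral_add_left (by fun_prop), RieszBL.D_prod lam hUn hUn, RieszBL.D_prod lam hUn hV,
            RieszBL.D_prod lam hV hUn, RieszBL.D_prod lam hV hV]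
    constructor
    · refine le_trans ?_ (add_le_add le_rfl hE)
      rw [hid, RieszBL.D_prod lam hSn hSn, RieszBL.D_prod lam hUn hUn, RieszBL.D_prod lam hV hV,
        ← lintegral_add_left (by fun_prop), ← lintegral_add_left (by fun_prop)]
      exact lintegral_mono fun q => (hpe q).1
    · refine le_trans ?_ (add_le_add le_rfl hE)
      rw [hid, RieszBL.D_prod lam hSn hSn, RieszBL.D_prod lam hUn hUn, RieszBL.D_prod lam hV hV,
        ← lintegral_add_left (by fun_prop), ← lintegral_add_left (by fun_prop)]
      exact lintegral_mono fun q => (hpe q).2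
  let a : ℕ → ℝ≥0∞ := fun n =>
    (RieszBL.D lam (S n) (S n) - (RieszBL.D lam (U n) (U n) + RieszBL.D lam V V)) +
    ((RieszBL.D lam (U n) (U n) + RieszBL.D lam V V) - RieszBL.D lam (S n) (S n))
  have hMt : M1 + M ≠ ⊤ := ENNReal.add_ne_top.2 ⟨hM1, hM.ne⟩
  have ha : Tendsto a atTop (nhds 0) := by
    refine RieszBL.squeeze2
      (b := fun k n => 2 * ((r ((k : NNReal) + 1)⁻¹ : ℝ≥0∞) * (2 * RieszBL.D lam (U n) V)))
      (c := fun k => 2 * (2 * ((((k : NNReal) + 1)⁻¹ : NNReal) : ℝ≥0∞) * (M1 + M))) ?_ ?_ ?_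
    · refine Eventually.of_forall fun k n => ?_
      obtain ⟨h1, h2⟩ := herr ((k : NNReal) + 1)⁻¹ (by positivity) n
      calc a n ≤ _ + _ := add_le_add (tsub_le_iff_left.2 h1) (tsub_le_iff_left.2 h2)
        _ = _ := by ring
    · refine Eventually.of_forall fun k => ?_
      have h1 := ENNReal.Tendsto.const_mul (a := 2) hcross (Or.inr (by simp))
      have h2 := ENNReal.Tendsto.const_mul (a := (r ((k : NNReal) + 1)⁻¹ : ℝ≥0∞)) h1 (Or.inr (by simp))
      have h3 := ENNReal.Tendsto.const_mul (a := 2) h2 (Or.inr (by simp))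
      simpa using h3
    · have h0 : Tendsto (fun k : ℕ => ((((k : NNReal) + 1)⁻¹ : NNReal) : ℝ≥0∞)) atTop (nhds 0) := by
        have : Tendsto (fun k : ℕ => ((k : NNReal) + 1)⁻¹) atTop (nhds 0) := by
          simpa using tendsto_one_div_add_atTop_nhds_zero_nat (𝕜 := NNReal)
        exact ENNReal.tendsto_coe.2 this
      have h1 := ENNReal.Tendsto.const_mul (a := 2) h0 (Or.inr (by simp))
      have h2 := ENNReal.Tendsto.mul_const (b := M1 + M) h1 (Or.inr hMt)
      have h3 := ENNReal.Tendsto.const_mul (a := 2) h2 (Or.inr (by simp))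
      simpa using h3
  have har : Tendsto (fun n => (a n).toReal) atTop (nhds 0) := by
    simpa [Function.comp_def] using (ENNReal.tendsto_toReal (by simp : (0:ℝ≥0∞) ≠ ⊤)).comp ha
  refine squeeze_zero_norm (fun n => ?_) har
  have tS : RieszBL.D lam (S n) (S n) ≠ ⊤ := ((hDS n).trans_lt hM).ne
  have tU : RieszBL.D lam (U n) (U n) ≠ ⊤ := ((hDU n).trans_lt hM1.lt_top).ne
  have tV : RieszBL.D lam V V ≠ ⊤ := (hDV.trans_lt hM).ne
  have tUV := ENNReal.add_ne_top.2 ⟨tU, tV⟩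
  have ta : a n ≠ ⊤ := ENNReal.add_ne_top.2 ⟨ENNReal.sub_ne_top tS, ENNReal.sub_ne_top tUV⟩
  have i1 : RieszBL.D lam (S n) (S n) ≤ (RieszBL.D lam (U n) (U n) + RieszBL.D lam V V) + a n :=
    tsub_le_iff_left.1 (le_add_right le_rfl)
  have i2 : (RieszBL.D lam (U n) (U n) + RieszBL.D lam V V) ≤ RieszBL.D lam (S n) (S n) + a n :=
    tsub_le_iff_left.1 (le_add_left le_rfl)
  have j1 := ENNReal.toReal_mono (ENNReal.add_ne_top.2 ⟨tUV, ta⟩) i1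
  have j2 := ENNReal.toReal_mono (ENNReal.add_ne_top.2 ⟨tS, ta⟩) i2
  rw [ENNReal.toReal_add tUV ta, ENNReal.toReal_add tU tV] at j1
  rw [ENNReal.toReal_add tS ta, ENNReal.toReal_add tU tV] at j2
  rw [Real.norm_eq_abs, abs_le]
  constructor <;> linarith
end
end

section
/- Let d ≥ 1, 0 < λ < d, and let f_n, f be measurable (complex-valued) functions on ℝ^d such that f_n(x) → f(x) for a.e. x ∈ ℝ^d and sup_n I_λ(f_n) < ∞. Then ∬_{ℝ^d×ℝ^d} ( \overline{f_n(x)} − \overline{f(x)} ) f(x) \overline{f(y)} ( f_n(y) − f(y) ) |x−y|^{−λ} dx dy → 0 as n → ∞. -/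
open MeasureTheory Filter ENNReal

noncomputable section

theorem aux_tonelli {X T : Type*} [MeasurableSpace X] [MeasurableSpace T]
    (ν : Measure X) (μ : Measure T) [SFinite ν] [SFinite μ]
    (φ : X → T → ℝ≥0∞) (hφ : Measurable (Function.uncurry φ))
    (ρ : X → ℝ≥0∞) (hρ : Measurable ρ) :
    ∫⁻ x, ∫⁻ y, ρ x * ρ y * ∫⁻ t, φ x t * φ y t ∂μ ∂ν ∂ν
      = ∫⁻ t, (∫⁻ x, ρ x * φ x t ∂ν) ^ 2 ∂μ := by
  have h1 : ∀ x, Measurable (φ x) := fun x => hφ.comp measurable_prodMk_left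
  have h2 : ∀ t, Measurable (fun x => φ x t) := fun t => hφ.comp measurable_prodMk_right
  have hm : Measurable (fun t => ∫⁻ y, ρ y * φ y t ∂ν) := by
    apply Measurable.lintegral_prod_left' (f := fun p : X × T => ρ p.1 * φ p.1 p.2)
    exact (hρ.comp measurable_fst).mul hφ
  have e1 : ∀ x, ∫⁻ y, ρ x * ρ y * ∫⁻ t, φ x t * φ y t ∂μ ∂ν
      = ∫⁻ t, ρ x * φ x t * ∫⁻ y, ρ y * φ y t ∂ν ∂μ := by
    intro x
    calc _ = ∫⁻ y, ∫⁻ t, ρ x * φ x t * (ρ y * φ y t) ∂μ ∂ν := by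
          refine lintegral_congr fun y => ?_
          rw [← lintegral_const_mul _ ((h1 x).fun_mul (h1 y))]
          refine lintegral_congr fun t => ?_
          ring
      _ = ∫⁻ t, ∫⁻ y, ρ x * φ x t * (ρ y * φ y t) ∂ν ∂μ := by
          apply lintegral_lintegral_swap
          apply Measurable.aemeasurable
          exact (measurable_const.mul ((h1 x).comp measurable_snd)).mul
            ((hρ.comp measurable_fst).mul hφ)
      _ = _ := by
          refine lintegral_congr fun t => ?_
          rw [lintegral_const_mul _ (hρ.fun_mul (h2 t))]
  simp_rw [e1]
  rw [lintegral_lintegral_swap]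
  · refine lintegral_congr fun t => ?_
    rw [lintegral_mul_const _ (hρ.fun_mul (h2 t)), sq]
  · apply Measurable.aemeasurable
    exact ((hρ.comp measurable_fst).mul hφ).mul (hm.comp measurable_snd)

/-- Quasi-subadditivity for kernels comparable to a positive-definite one. -/
theorem aux_subadd {X T : Type*} [MeasurableSpace X] [MeasurableSpace T]
    (ν : Measure X) (μ : Measure T) [SFinite ν] [SFinite μ]
    (φ : X → T → ℝ≥0∞) (hφ : Measurable (Function.uncurry φ))
    (ρ σ : X → ℝ≥0∞) (hρ : Measurable ρ) (hσ : Measurable σ)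
    (k : X → X → ℝ≥0∞) (C₁ C₂ : ℝ≥0∞) (hC₁ : C₁ ≠ ⊤) (hC₂ : C₂ ≠ ⊤)
    (hk1 : ∀ x, ∀ᵐ y ∂ν, k x y ≤ C₁ * ∫⁻ t, φ x t * φ y t ∂μ)
    (hk2 : ∀ x, ∀ᵐ y ∂ν, ∫⁻ t, φ x t * φ y t ∂μ ≤ C₂ * k x y) :
    ∫⁻ x, ∫⁻ y, (ρ x + σ x) * (ρ y + σ y) * k x y ∂ν ∂ν ≤
      2 * C₁ * C₂ * (∫⁻ x, ∫⁻ y, ρ x * ρ y * k x y ∂ν ∂ν +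
        ∫⁻ x, ∫⁻ y, σ x * σ y * k x y ∂ν ∂ν) := by
  have h2 : ∀ t, Measurable (fun x => φ x t) := fun t => hφ.comp measurable_prodMk_right
  have hm : ∀ ρ : X → ℝ≥0∞, Measurable ρ → Measurable (fun t => ∫⁻ y, ρ y * φ y t ∂ν) := by
    intro ρ hρ
    apply Measurable.lintegral_prod_left' (f := fun p : X × T => ρ p.1 * φ p.1 p.2)
    exact (hρ.comp measurable_fst).mul hφ
  have low : ∀ ρ : X → ℝ≥0∞, Measurable ρ → ∫⁻ t, (∫⁻ x, ρ x * φ x t ∂ν) ^ 2 ∂μ ≤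
      C₂ * ∫⁻ x, ∫⁻ y, ρ x * ρ y * k x y ∂ν ∂ν := by
    intro ρ hρ
    rw [← aux_tonelli ν μ φ hφ ρ hρ, ← lintegral_const_mul' _ _ hC₂]
    refine lintegral_mono fun x => ?_
    rw [← lintegral_const_mul' _ _ hC₂]
    refine lintegral_mono_ae ?_
    filter_upwards [hk2 x] with y hy
    calc _ ≤ ρ x * ρ y * (C₂ * k x y) := by gcongr
      _ = _ := by ring
  calc _ ≤ C₁ * ∫⁻ x, ∫⁻ y, (ρ x + σ x) * (ρ y + σ y) * ∫⁻ t, φ x t * φ y t ∂μ ∂ν ∂ν := by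
        rw [← lintegral_const_mul' _ _ hC₁]
        refine lintegral_mono fun x => ?_
        rw [← lintegral_const_mul' _ _ hC₁]
        refine lintegral_mono_ae ?_
        filter_upwards [hk1 x] with y hy
        calc _ ≤ (ρ x + σ x) * (ρ y + σ y) * (C₁ * ∫⁻ t, φ x t * φ y t ∂μ) := by gcongr
          _ = _ := by ring
    _ = C₁ * ∫⁻ t, (∫⁻ x, (ρ x + σ x) * φ x t ∂ν) ^ 2 ∂μ := by
        rw [← aux_tonelli ν μ φ hφ (fun x => ρ x + σ x) (hρ.add hσ)]
    _ = C₁ * ∫⁻ t, (∫⁻ x, ρ x * φ x t ∂ν + ∫⁻ x, σ x * φ x t ∂ν) ^ 2 ∂μ := by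
        congr 1
        refine lintegral_congr fun t => ?_
        rw [← lintegral_add_left (hρ.fun_mul (h2 t))]
        simp only [add_mul]
    _ ≤ C₁ * ∫⁻ t, 2 * ((∫⁻ x, ρ x * φ x t ∂ν) ^ 2 + (∫⁻ x, σ x * φ x t ∂ν) ^ 2) ∂μ := by
        gcongr with t
        have := ENNReal.rpow_add_le_mul_rpow_add_rpow (∫⁻ x, ρ x * φ x t ∂ν)
          (∫⁻ x, σ x * φ x t ∂ν) (p := 2) (by norm_num)
        norm_num at this
        simpa using this
    _ = 2 * C₁ * (∫⁻ t, (∫⁻ x, ρ x * φ x t ∂ν) ^ 2 ∂μ + ∫⁻ t, (∫⁻ x, σ x * φ x t ∂ν) ^ 2 ∂μ) := by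
        rw [lintegral_const_mul' _ _ (by simp), lintegral_add_left ((hm ρ hρ).pow_const 2)]
        ring
    _ ≤ 2 * C₁ * (C₂ * ∫⁻ x, ∫⁻ y, ρ x * ρ y * k x y ∂ν ∂ν +
        C₂ * ∫⁻ x, ∫⁻ y, σ x * σ y * k x y ∂ν ∂ν) := by
        gcongr
        · exact low ρ hρ
        · exact low σ hσ
    _ = _ := by ring

theorem aux_scale (d : ℕ) (lam : ℝ) (hlam : 0 < lam) (s : ℝ) (hs : 0 < s) :
    ∫⁻ r in Set.Ioi s, ENNReal.ofReal (r ^ (-lam - d - 1)) * ENNReal.ofReal (r ^ d)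
      = ENNReal.ofReal (s ^ (-lam) / lam) := by
  have h := integral_Ioi_rpow_of_lt (a := -lam - 1) (by linarith) hs
  have hi := integrableOn_Ioi_rpow_of_lt (a := -lam - 1) (by linarith) hs
  have : s ^ (-lam) / lam = ∫ r in Set.Ioi s, r ^ (-lam - 1) := by
    rw [h]; simp [neg_div_neg_eq]
  rw [this, ofReal_integral_eq_lintegral_ofReal hi]
  · refine setLIntegral_congr_fun measurableSet_Ioi fun r hr => ?_
    have hr0 : 0 < r := hs.trans hr
    rw [← ENNReal.ofReal_mul (by positivity), ← Real.rpow_natCast r d, ← Real.rpow_add hr0]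
    congr 2
    ring
  · filter_upwards [self_mem_ae_restrict measurableSet_Ioi] with r hr
    have hr0 : 0 < r := hs.trans hr
    simp only [Pi.zero_apply]
    positivity

/-- scale measure -/
def scaleMeas (d : ℕ) (lam : ℝ) : Measure ℝ :=
  (volume.restrict (Set.Ioi 0)).withDensity (fun r => ENNReal.ofReal (r ^ (-lam - d - 1)))

/-- ball kernel -/
def ballKer (d : ℕ) (x : EuclideanSpace ℝ (Fin d)) (t : ℝ × EuclideanSpace ℝ (Fin d)) : ℝ≥0∞ :=
  (Metric.ball x t.1).indicator 1 t.2

instance (d : ℕ) (lam : ℝ) : SFinite (scaleMeas d lam) := by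
  unfold scaleMeas; infer_instance

theorem ballKer_meas (d : ℕ) : Measurable (Function.uncurry (ballKer d)) := by
  have : Function.uncurry (ballKer d) = Set.indicator
      {p : EuclideanSpace ℝ (Fin d) × ℝ × EuclideanSpace ℝ (Fin d) | dist p.2.2 p.1 < p.2.1} 1 := by
    ext p
    simp [Function.uncurry, ballKer, Set.indicator]
  rw [this]
  refine measurable_one.indicator ?_
  exact (isOpen_lt (by fun_prop) (by fun_prop)).measurableSet

theorem ballKer_int (d : ℕ) (lam : ℝ) (x y : EuclideanSpace ℝ (Fin d)) :
    ∫⁻ t, ballKer d x t * ballKer d y t ∂((scaleMeas d lam).prod volume)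
     = ∫⁻ r in Set.Ioi 0, ENNReal.ofReal (r ^ (-lam - d - 1)) *
        volume (Metric.ball x r ∩ Metric.ball y r) := by
  have h1 : ∀ x, Measurable (ballKer d x) := fun x =>
    (ballKer_meas d).of_uncurry_left
  have hm : Measurable (fun t => ballKer d x t * ballKer d y t) := (h1 x).fun_mul (h1 y)
  have e : ∀ r, ∫⁻ z, ballKer d x (r, z) * ballKer d y (r, z) =
      volume (Metric.ball x r ∩ Metric.ball y r) := by
    intro r
    rw [← lintegral_indicator_one (measurableSet_ball.inter measurableSet_ball)]
    refine lintegral_congr fun z => ?_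
    rw [Set.inter_indicator_one, Pi.mul_apply]
    rfl
  rw [lintegral_prod _ hm.aemeasurable]
  have hm2 : Measurable fun r => ∫⁻ z, ballKer d x (r, z) * ballKer d y (r, z) :=
    hm.lintegral_prod_right'
  simp only [e] at hm2 ⊢
  unfold scaleMeas
  rw [lintegral_withDensity_eq_lintegral_mul _ (by fun_prop) hm2]
  rfl

theorem ball_vol (d : ℕ) (x : EuclideanSpace ℝ (Fin d)) (r : ℝ) (hr : 0 < r) :
    volume (Metric.ball x r) = ENNReal.ofReal (r ^ d) *
      volume (Metric.ball (0 : EuclideanSpace ℝ (Fin d)) 1) := by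
  rw [Measure.addHaar_ball_of_pos _ _ hr]
  simp

theorem ballKer_upper (d : ℕ) (lam : ℝ) (hlam : 0 < lam) :
    ∃ C : ℝ≥0∞, C ≠ ⊤ ∧ ∀ x y : EuclideanSpace ℝ (Fin d), x ≠ y →
      ∫⁻ t, ballKer d x t * ballKer d y t ∂((scaleMeas d lam).prod volume)
        ≤ C * ENNReal.ofReal (‖x - y‖ ^ (-lam)) := by
  set V := volume (Metric.ball (0 : EuclideanSpace ℝ (Fin d)) 1) with hV
  refine ⟨ENNReal.ofReal ((1/2) ^ (-lam) / lam) * V, ?_, fun x y hxy => ?_⟩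
  · exact ENNReal.mul_ne_top (by simp) measure_ball_lt_top.ne
  have hs : 0 < ‖x - y‖ := norm_pos_iff.2 (sub_ne_zero.2 hxy)
  set s := ‖x - y‖ with hsdef
  rw [ballKer_int]
  calc _ ≤ ∫⁻ r in Set.Ioi 0, (Set.Ioi (s/2)).indicator (fun r =>
          ENNReal.ofReal (r ^ (-lam - d - 1)) * ENNReal.ofReal (r ^ d) * V) r := by
        refine setLIntegral_mono' measurableSet_Ioi fun r hr => ?_
        by_cases h : s / 2 < r
        · rw [Set.indicator_of_mem (by exact h), mul_assoc, hV, ← ball_vol d x r hr]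
          gcongr
          exact Set.inter_subset_left
        · have : Metric.ball x r ∩ Metric.ball y r = ∅ := by
            rw [← Set.disjoint_iff_inter_eq_empty]
            apply Metric.ball_disjoint_ball
            rw [dist_eq_norm]; linarith
          simp [this]
    _ ≤ ∫⁻ r, (Set.Ioi (s/2)).indicator (fun r =>
          ENNReal.ofReal (r ^ (-lam - d - 1)) * ENNReal.ofReal (r ^ d) * V) r :=
        setLIntegral_le_lintegral _ _
    _ = ENNReal.ofReal ((s/2) ^ (-lam) / lam) * V := by
        rw [lintegral_indicator measurableSet_Ioi, lintegral_mul_const _ (by fun_prop),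
          aux_scale d lam hlam _ (by positivity)]
    _ = _ := by
        rw [mul_right_comm, ← ENNReal.ofReal_mul (by positivity)]
        congr 2
        rw [show s / 2 = s * (1/2) by ring, Real.mul_rpow hs.le (by norm_num)]
        ring

theorem ballKer_lower (d : ℕ) (lam : ℝ) (hlam : 0 < lam) :
    ∃ C : ℝ≥0∞, C ≠ ⊤ ∧ ∀ x y : EuclideanSpace ℝ (Fin d), x ≠ y →
      ENNReal.ofReal (‖x - y‖ ^ (-lam)) ≤
      C * ∫⁻ t, ballKer d x t * ballKer d y t ∂((scaleMeas d lam).prod volume) := by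
  set V := volume (Metric.ball (0 : EuclideanSpace ℝ (Fin d)) 1) with hV
  set c := ENNReal.ofReal (2 ^ (-lam) / lam) * (ENNReal.ofReal ((1/2)^d) * V) with hc
  have hV0 : V ≠ 0 := (Metric.measure_ball_pos _ _ one_pos).ne'
  have hVt : V ≠ ⊤ := measure_ball_lt_top.ne
  have hc0 : c ≠ 0 := by
    refine mul_ne_zero ?_ (mul_ne_zero ?_ hV0)
    · rw [ne_eq, ENNReal.ofReal_eq_zero, not_le]; positivity
    · rw [ne_eq, ENNReal.ofReal_eq_zero, not_le]; positivity
  have hct : c ≠ ⊤ := ENNReal.mul_ne_top (by simp) (ENNReal.mul_ne_top (by simp) hVt)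
  refine ⟨c⁻¹, ENNReal.inv_ne_top.2 hc0, fun x y hxy => ?_⟩
  have hs : 0 < ‖x - y‖ := norm_pos_iff.2 (sub_ne_zero.2 hxy)
  rw [ballKer_int, ← ENNReal.div_eq_inv_mul, ENNReal.le_div_iff_mul_le (Or.inl hc0) (Or.inl hct)]
  set s := ‖x - y‖ with hsdef
  calc _ = ENNReal.ofReal ((2*s) ^ (-lam) / lam) * (ENNReal.ofReal ((1/2)^d) * V) := by
        rw [hc, ← mul_assoc, ← ENNReal.ofReal_mul (by positivity)]
        congr 2
        rw [Real.mul_rpow (by norm_num) hs.le]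
        ring
    _ = ∫⁻ r in Set.Ioi (2*s), ENNReal.ofReal (r ^ (-lam - d - 1)) * ENNReal.ofReal (r ^ d) *
          (ENNReal.ofReal ((1/2)^d) * V) := by
        rw [lintegral_mul_const _ (by fun_prop), aux_scale d lam hlam _ (by positivity)]
    _ ≤ ∫⁻ r in Set.Ioi (2*s), ENNReal.ofReal (r ^ (-lam - d - 1)) *
        volume (Metric.ball x r ∩ Metric.ball y r) := by
        refine setLIntegral_mono' measurableSet_Ioi fun r hr => ?_
        have hr' : 2 * s < r := hr
        have hr0 : 0 < r := by linarith
        rw [mul_assoc, ← mul_assoc (ENNReal.ofReal (r ^ d)), ← ENNReal.ofReal_mul (by positivity),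
          ← mul_pow, hV, ← ball_vol d x _ (by positivity)]
        gcongr
        apply Set.subset_inter
        · exact Metric.ball_subset_ball (by linarith)
        · apply Metric.ball_subset_ball'
          rw [dist_eq_norm]; linarith
    _ ≤ _ := by
        refine lintegral_mono_set ?_
        exact Set.Ioi_subset_Ioi (by positivity)

theorem kmeas (d : ℕ) (lam : ℝ) : Measurable
    (fun p : EuclideanSpace ℝ (Fin d) × EuclideanSpace ℝ (Fin d) =>
      ENNReal.ofReal (‖p.1 - p.2‖ ^ (-lam))) := by
  fun_prop

theorem energy_prod (d : ℕ) (lam : ℝ) (g : EuclideanSpace ℝ (Fin d) → ℂ) (hg : Measurable g) :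
    rieszEnergy d lam g = ∫⁻ p : EuclideanSpace ℝ (Fin d) × EuclideanSpace ℝ (Fin d),
      ‖g p.1‖ₑ ^ 2 * ‖g p.2‖ₑ ^ 2 * ENNReal.ofReal (‖p.1 - p.2‖ ^ (-lam)) := by
  rw [Measure.volume_eq_prod, lintegral_prod]
  · rfl
  · apply Measurable.aemeasurable
    have := kmeas d lam
    fun_prop

theorem energy_sub (d : ℕ) (hd : 1 ≤ d) (lam : ℝ) (hlam : 0 < lam) :
    ∃ C : ℝ≥0∞, C ≠ ⊤ ∧ ∀ g h : EuclideanSpace ℝ (Fin d) → ℂ, Measurable g → Measurable h →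
      rieszEnergy d lam (fun x => g x - h x) ≤
        C * (rieszEnergy d lam g + rieszEnergy d lam h) := by
  obtain ⟨C₁, hC₁, h₁⟩ := ballKer_lower d lam hlam
  obtain ⟨C₂, hC₂, h₂⟩ := ballKer_upper d lam hlam
  refine ⟨4 * (2 * C₁ * C₂), ENNReal.mul_ne_top (by simp)
    (ENNReal.mul_ne_top (ENNReal.mul_ne_top (by simp) hC₁) hC₂), fun g h hg hh => ?_⟩
  have : Nonempty (Fin d) := ⟨⟨0, hd⟩⟩
  have hne : ∀ x : EuclideanSpace ℝ (Fin d), ∀ᵐ y, x ≠ y := by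
    intro x
    have : ∀ᵐ y : EuclideanSpace ℝ (Fin d), y ≠ x := Measure.ae_ne volume x
    filter_upwards [this] with y hy using hy.symm
  have key := aux_subadd volume ((scaleMeas d lam).prod volume) (ballKer d) (ballKer_meas d)
    (fun x => ‖g x‖ₑ ^ 2) (fun x => ‖h x‖ₑ ^ 2) (by fun_prop) (by fun_prop)
    (fun x y => ENNReal.ofReal (‖x - y‖ ^ (-lam))) C₁ C₂ hC₁ hC₂
    (fun x => by filter_upwards [hne x] with y hy using h₁ x y hy)
    (fun x => by filter_upwards [hne x] with y hy using h₂ x y hy)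
  have hb : ∀ x, ‖g x - h x‖ₑ ^ 2 ≤ 2 * (‖g x‖ₑ ^ 2 + ‖h x‖ₑ ^ 2) := by
    intro x
    have := ENNReal.rpow_add_le_mul_rpow_add_rpow ‖g x‖ₑ ‖h x‖ₑ (p := 2) (by norm_num)
    norm_num at this
    refine le_trans ?_ this
    gcongr
    exact enorm_sub_le
  calc rieszEnergy d lam (fun x => g x - h x)
      ≤ ∫⁻ x, ∫⁻ y, 4 * ((‖g x‖ₑ ^ 2 + ‖h x‖ₑ ^ 2) * (‖g y‖ₑ ^ 2 + ‖h y‖ₑ ^ 2) *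
        ENNReal.ofReal (‖x - y‖ ^ (-lam))) := by
        refine lintegral_mono fun x => lintegral_mono fun y => ?_
        calc _ ≤ (2 * (‖g x‖ₑ ^ 2 + ‖h x‖ₑ ^ 2)) * (2 * (‖g y‖ₑ ^ 2 + ‖h y‖ₑ ^ 2)) *
              ENNReal.ofReal (‖x - y‖ ^ (-lam)) := by
              gcongr
              · exact hb x
              · exact hb y
          _ = _ := by ring
    _ = 4 * ∫⁻ x, ∫⁻ y, ((‖g x‖ₑ ^ 2 + ‖h x‖ₑ ^ 2) * (‖g y‖ₑ ^ 2 + ‖h y‖ₑ ^ 2) *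
        ENNReal.ofReal (‖x - y‖ ^ (-lam))) := by
        rw [← lintegral_const_mul' _ _ (by simp)]
        refine lintegral_congr fun x => ?_
        rw [← lintegral_const_mul' _ _ (by simp)]
    _ ≤ 4 * (2 * C₁ * C₂ * (rieszEnergy d lam g + rieszEnergy d lam h)) := by
        gcongr
        exact key
    _ = _ := by ring

theorem ptwise (g w k R : ℝ≥0∞) (hR : R ≠ 0) (hR' : R ≠ ⊤) :
    g * w * k ≤ min (g * w) (R * w ^ 2) * k + R⁻¹ * (g ^ 2 * k) := by
  rcases le_total (g * w) (R * w ^ 2) with h | h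
  · rw [min_eq_left h]; exact le_self_add
  · by_cases hgw : g ≤ R * w
    · have : g * w ≤ R * w ^ 2 := by
        calc g * w ≤ (R * w) * w := by gcongr
          _ = _ := by ring
      rw [min_eq_left this]; exact le_self_add
    · have h1 : w ≤ R⁻¹ * g := by
        rw [← ENNReal.div_eq_inv_mul, ENNReal.le_div_iff_mul_le (Or.inl hR) (Or.inl hR'), mul_comm]
        exact (not_le.1 hgw).le
      calc g * w * k ≤ g * (R⁻¹ * g) * k := by gcongr
        _ = R⁻¹ * (g ^ 2 * k) := by ring
        _ ≤ _ := le_add_self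

theorem riesz_cross_term_vanishes
    (d : ℕ) (hd : 1 ≤ d) (lam : ℝ) (hlam₀ : 0 < lam) (hlam₁ : lam < d)
    (f : ℕ → EuclideanSpace ℝ (Fin d) → ℂ) (f₀ : EuclideanSpace ℝ (Fin d) → ℂ)
    (hmeas : ∀ n, Measurable (f n)) (hmeas₀ : Measurable f₀)
    (hae : ∀ᵐ x : EuclideanSpace ℝ (Fin d), Tendsto (fun n => f n x) atTop (nhds (f₀ x)))
    (hriesz : ∃ M : ℝ≥0∞, M < ⊤ ∧ ∀ n, rieszEnergy d lam (f n) ≤ M) :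
    Tendsto (fun n => ∫ x, ∫ y,
        ((starRingEnd ℂ) (f n x) - (starRingEnd ℂ) (f₀ x)) * f₀ x *
          (starRingEnd ℂ) (f₀ y) * (f n y - f₀ y) * ((‖x - y‖ ^ (-lam) : ℝ) : ℂ))
      atTop (nhds (0 : ℂ)) := by
  obtain ⟨M, hM, hfM⟩ := hriesz
  obtain ⟨C, hC, hsub⟩ := energy_sub d hd lam hlam₀
  have hk := kmeas d lam
  have hae2 : ∀ᵐ p : EuclideanSpace ℝ (Fin d) × EuclideanSpace ℝ (Fin d),
      Tendsto (fun n => f n p.1) atTop (nhds (f₀ p.1)) ∧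
      Tendsto (fun n => f n p.2) atTop (nhds (f₀ p.2)) := by
    rw [Measure.volume_eq_prod]
    exact (Measure.quasiMeasurePreserving_fst.ae hae).and
      (Measure.quasiMeasurePreserving_snd.ae hae)
  have hf₀M : rieszEnergy d lam f₀ ≤ M := by
    rw [energy_prod d lam f₀ hmeas₀]
    calc _ ≤ ∫⁻ p : EuclideanSpace ℝ (Fin d) × EuclideanSpace ℝ (Fin d), liminf (fun n =>
          ‖f n p.1‖ₑ ^ 2 * ‖f n p.2‖ₑ ^ 2 * ENNReal.ofReal (‖p.1 - p.2‖ ^ (-lam))) atTop := by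
          refine lintegral_mono_ae ?_
          filter_upwards [hae2] with p hp
          refine le_of_eq (Tendsto.liminf_eq ?_).symm
          have t1 : Tendsto (fun n => ‖f n p.1‖ₑ ^ 2) atTop (nhds (‖f₀ p.1‖ₑ ^ 2)) :=
            ENNReal.Tendsto.pow hp.1.enorm
          have t2 : Tendsto (fun n => ‖f n p.2‖ₑ ^ 2) atTop (nhds (‖f₀ p.2‖ₑ ^ 2)) :=
            ENNReal.Tendsto.pow hp.2.enorm
          refine ENNReal.Tendsto.mul_const (ENNReal.Tendsto.mul t1 (Or.inr ?_) t2 (Or.inr ?_))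
            (Or.inr ENNReal.ofReal_ne_top)
          · exact ENNReal.pow_ne_top enorm_ne_top
          · exact ENNReal.pow_ne_top enorm_ne_top
      _ ≤ liminf (fun n => ∫⁻ p : EuclideanSpace ℝ (Fin d) × EuclideanSpace ℝ (Fin d),
          ‖f n p.1‖ₑ ^ 2 * ‖f n p.2‖ₑ ^ 2 * ENNReal.ofReal (‖p.1 - p.2‖ ^ (-lam))) atTop := by
          refine lintegral_liminf_le fun n => ?_
          have := hmeas n
          fun_prop
      _ ≤ liminf (fun _ : ℕ => M) atTop := by
          refine liminf_le_liminf (Eventually.of_forall fun n => ?_)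
          rw [← energy_prod d lam (f n) (hmeas n)]
          exact hfM n
      _ = M := liminf_const _
  set M' := C * (M + M) with hM'
  have hM't : M' ≠ ⊤ := ENNReal.mul_ne_top hC (by simp [hM.ne])
  have hGM : ∀ n, rieszEnergy d lam (fun x => f n x - f₀ x) ≤ M' := fun n =>
    (hsub _ _ (hmeas n) hmeas₀).trans (by rw [hM']; gcongr; exact hfM n)
  -- the absolute integral
  have hT : Tendsto (fun n => ∫⁻ p : EuclideanSpace ℝ (Fin d) × EuclideanSpace ℝ (Fin d),
      (‖f n p.1 - f₀ p.1‖ₑ * ‖f n p.2 - f₀ p.2‖ₑ) * (‖f₀ p.1‖ₑ * ‖f₀ p.2‖ₑ) *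
        ENNReal.ofReal (‖p.1 - p.2‖ ^ (-lam))) atTop (nhds 0) := by
    rw [ENNReal.tendsto_nhds_zero]
    intro ε hε
    obtain ⟨N, hN⟩ := ENNReal.exists_nat_mul_gt (ENNReal.half_pos hε.ne').ne' hM't
    have hN0 : (N : ℝ≥0∞) ≠ 0 := by
      rintro h; rw [h] at hN; simp at hN
    have hNt : (N : ℝ≥0∞) ≠ ⊤ := by simp
    have hsmall : (N : ℝ≥0∞)⁻¹ * M' ≤ ε / 2 := by
      rw [← ENNReal.div_eq_inv_mul]
      apply ENNReal.div_le_of_le_mul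
      rw [mul_comm]; exact hN.le
    have hdct : Tendsto (fun n => ∫⁻ p : EuclideanSpace ℝ (Fin d) × EuclideanSpace ℝ (Fin d),
        min ((‖f n p.1 - f₀ p.1‖ₑ * ‖f n p.2 - f₀ p.2‖ₑ) * (‖f₀ p.1‖ₑ * ‖f₀ p.2‖ₑ))
          (N * (‖f₀ p.1‖ₑ * ‖f₀ p.2‖ₑ) ^ 2) *
        ENNReal.ofReal (‖p.1 - p.2‖ ^ (-lam))) atTop
        (nhds (∫⁻ p : EuclideanSpace ℝ (Fin d) × EuclideanSpace ℝ (Fin d), 0)) := by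
      refine tendsto_lintegral_of_dominated_convergence
        (fun p => N * (‖f₀ p.1‖ₑ ^ 2 * ‖f₀ p.2‖ₑ ^ 2 * ENNReal.ofReal (‖p.1 - p.2‖ ^ (-lam))))
        (fun n => ?_) (fun n => ?_) ?_ ?_
      · have := hmeas n
        fun_prop
      · refine Eventually.of_forall fun p => ?_
        calc _ ≤ (N * (‖f₀ p.1‖ₑ * ‖f₀ p.2‖ₑ) ^ 2) * ENNReal.ofReal (‖p.1 - p.2‖ ^ (-lam)) := by
              exact mul_le_mul_left (min_le_right _ _) _
          _ = _ := by ring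
      · rw [lintegral_const_mul' _ _ hNt, ← energy_prod d lam f₀ hmeas₀]
        exact ENNReal.mul_ne_top hNt (hf₀M.trans_lt hM).ne
      · filter_upwards [hae2] with p hp
        have t1 : Tendsto (fun n => ‖f n p.1 - f₀ p.1‖ₑ) atTop (nhds 0) := by
          simpa using (hp.1.sub_const (f₀ p.1)).enorm
        have t2 : Tendsto (fun n => ‖f n p.2 - f₀ p.2‖ₑ) atTop (nhds 0) := by
          simpa using (hp.2.sub_const (f₀ p.2)).enorm
        have t3 : Tendsto (fun n => ‖f n p.1 - f₀ p.1‖ₑ * ‖f n p.2 - f₀ p.2‖ₑ) atTop (nhds 0) := by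
          simpa using ENNReal.Tendsto.mul t1 (Or.inr (by simp)) t2 (Or.inr (by simp))
        have t4 := ENNReal.Tendsto.mul_const (b := ENNReal.ofReal (‖p.1 - p.2‖ ^ (-lam)))
          (ENNReal.Tendsto.mul_const (b := ‖f₀ p.1‖ₑ * ‖f₀ p.2‖ₑ) t3
            (Or.inr (ENNReal.mul_ne_top enorm_ne_top enorm_ne_top)))
            (Or.inr ENNReal.ofReal_ne_top)
        simp only [zero_mul] at t4
        refine tendsto_of_tendsto_of_tendsto_of_le_of_le tendsto_const_nhds t4
          (fun n => zero_le) (fun n => ?_)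
        simp only
        gcongr
        exact min_le_left _ _
    rw [lintegral_zero, ENNReal.tendsto_nhds_zero] at hdct
    filter_upwards [hdct (ε / 2) (ENNReal.half_pos hε.ne')] with n hn
    have hmn := hmeas n
    calc _ ≤ ∫⁻ p : EuclideanSpace ℝ (Fin d) × EuclideanSpace ℝ (Fin d),
        (min ((‖f n p.1 - f₀ p.1‖ₑ * ‖f n p.2 - f₀ p.2‖ₑ) * (‖f₀ p.1‖ₑ * ‖f₀ p.2‖ₑ))
          (N * (‖f₀ p.1‖ₑ * ‖f₀ p.2‖ₑ) ^ 2) * ENNReal.ofReal (‖p.1 - p.2‖ ^ (-lam)) +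
        (N : ℝ≥0∞)⁻¹ * ((‖f n p.1 - f₀ p.1‖ₑ * ‖f n p.2 - f₀ p.2‖ₑ) ^ 2 *
          ENNReal.ofReal (‖p.1 - p.2‖ ^ (-lam)))) :=
          lintegral_mono fun p => ptwise _ _ _ _ hN0 hNt
      _ ≤ ε / 2 + (N : ℝ≥0∞)⁻¹ * M' := by
          rw [lintegral_add_left (by fun_prop),
            lintegral_const_mul' _ _ (ENNReal.inv_ne_top.2 hN0)]
          gcongr
          refine le_trans (le_of_eq ?_) (hGM n)
          rw [energy_prod d lam (fun x => f n x - f₀ x) (hmn.fun_sub hmeas₀)]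
          refine lintegral_congr fun p => ?_
          rw [mul_pow]
      _ ≤ ε / 2 + ε / 2 := by gcongr
      _ = ε := ENNReal.add_halves ε
  rw [tendsto_zero_iff_enorm_tendsto_zero]
  refine tendsto_of_tendsto_of_tendsto_of_le_of_le tendsto_const_nhds hT
    (fun n => zero_le) (fun n => ?_)
  have hmn := hmeas n
  simp only
  rw [Measure.volume_eq_prod, lintegral_prod _ (by
    apply Measurable.aemeasurable
    fun_prop)]
  refine (enorm_integral_le_lintegral_enorm _).trans (lintegral_mono fun x => ?_)
  refine (enorm_integral_le_lintegral_enorm _).trans (lintegral_mono fun y => le_of_eq ?_)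
  have hkk : ‖((‖x - y‖ ^ (-lam) : ℝ) : ℂ)‖ₑ = ENNReal.ofReal (‖x - y‖ ^ (-lam)) := by
    rw [← ofReal_norm, Complex.norm_real, Real.norm_of_nonneg (by positivity)]
  have hconj : ∀ z : ℂ, ‖(starRingEnd ℂ) z‖ₑ = ‖z‖ₑ := fun z => by
    rw [← ofReal_norm, ← ofReal_norm, RCLike.norm_conj]
  simp only [← map_sub, enorm_mul, hkk, hconj]
  ring
end
end

section
/- Let d ≥ 1, 0 < λ < d, 2 < p < ∞, and let f_n, f be measurable functions on ℝ^d such that f_n(x) → f(x) for a.e. x ∈ ℝ^d, sup_n I_λ(f_n) < ∞ and sup_n ‖f_n‖_{L^p} < ∞. Then ∬_{ℝ^d×ℝ^d} |f_n(x)|² |f(y)|² |x−y|^{−λ} dx dy → ∬_{ℝ^d×ℝ^d} |f(x)|² |f(y)|² |x−y|^{−λ} dx dy as n → ∞. -/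
open MeasureTheory Filter ENNReal

noncomputable section

section helpers

open Set Topology

/-- abstract squeeze -/
lemma tendsto_of_split {a b : ℕ → ℝ≥0∞} {a₀ b₀ : ℝ≥0∞}
    (hab : Tendsto (fun n => a n + b n) atTop (𝓝 (a₀ + b₀))) (hfin : a₀ + b₀ ≠ ⊤)
    (ha : a₀ ≤ liminf a atTop) (hb : b₀ ≤ liminf b atTop) : Tendsto a atTop (𝓝 a₀) := by
  have ha0 : a₀ ≠ ⊤ := fun h => hfin (by simp [h])
  have hb0 : b₀ ≠ ⊤ := fun h => hfin (by simp [h])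
  apply tendsto_of_le_liminf_of_limsup_le ha
  apply ENNReal.le_of_forall_pos_le_add
  intro ε hε _
  have hε' : (0 : ℝ≥0∞) < (ε : ℝ≥0∞) / 2 := by
    apply ENNReal.div_pos <;> simp [hε.ne']
  have h1 : ∀ᶠ n in atTop, a n + b n ≤ a₀ + b₀ + ε / 2 := by
    have : a₀ + b₀ < a₀ + b₀ + ε / 2 := ENNReal.lt_add_right hfin hε'.ne'
    filter_upwards [hab.eventually (gt_mem_nhds this)] with n hn using hn.le
  have h2 : ∀ᶠ n in atTop, b₀ ≤ b n + ε / 2 := by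
    by_cases hz : b₀ = 0
    · simp [hz]
    have : b₀ - ε / 2 < liminf b atTop :=
      lt_of_lt_of_le (ENNReal.sub_lt_self hb0 hz hε'.ne') hb
    filter_upwards [eventually_lt_of_lt_liminf this] with n hn
    exact tsub_le_iff_right.1 hn.le
  apply limsup_le_of_le (by isBoundedDefault)
  filter_upwards [h1, h2] with n h1 h2
  have hbn : b n ≠ ⊤ := by
    intro h
    rw [h] at h1
    simp only [add_top, top_le_iff] at h1
    have : (ε : ℝ≥0∞) / 2 ≠ ⊤ := (ENNReal.div_lt_top (by simp) (by simp)).ne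
    exact (ENNReal.add_ne_top.2 ⟨hfin, this⟩) h1
  have : a n + b n ≤ a₀ + ε + b n := by
    calc a n + b n ≤ a₀ + b₀ + ε / 2 := h1
      _ ≤ a₀ + (b n + ε / 2) + ε / 2 := by gcongr
      _ = a₀ + (ε / 2 + ε / 2) + b n := by ring
      _ = a₀ + ε + b n := by rw [ENNReal.add_halves]
  exact (ENNReal.add_le_add_iff_right hbn).1 this

/-- limsup through truncation -/
lemma tendsto_of_trunc {a : ℕ → ℝ≥0∞} {a₀ : ℝ≥0∞} (ha : a₀ ≤ liminf a atTop)
    (b : ℕ → ℕ → ℝ≥0∞) (b₀ : ℕ → ℝ≥0∞) (e : ℕ → ℝ≥0∞)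
    (hb : ∀ L, Tendsto (b L) atTop (𝓝 (b₀ L))) (hb₀ : ∀ L, b₀ L ≤ a₀)
    (he : Tendsto e atTop (𝓝 0)) (hle : ∀ᶠ L in atTop, ∀ n, a n ≤ b L n + e L) :
    Tendsto a atTop (𝓝 a₀) := by
  apply tendsto_of_le_liminf_of_limsup_le ha
  have h1 : ∀ᶠ L in atTop, limsup a atTop ≤ a₀ + e L := by
    filter_upwards [hle] with L hL
    have h2 : Tendsto (fun n => b L n + e L) atTop (𝓝 (b₀ L + e L)) :=
      (hb L).add tendsto_const_nhds
    calc limsup a atTop ≤ limsup (fun n => b L n + e L) atTop :=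
          limsup_le_limsup (Eventually.of_forall hL)
      _ = b₀ L + e L := h2.limsup_eq
      _ ≤ _ := by gcongr; exact hb₀ L
  have h3 : Tendsto (fun L => a₀ + e L) atTop (𝓝 (a₀ + 0)) := tendsto_const_nhds.add he
  rw [add_zero] at h3
  exact ge_of_tendsto h3 h1

/-- Weak `L²` convergence from boundedness and pointwise convergence. -/
lemma weak_conv {P : Type*} [MeasurableSpace P] (μ : Measure P) (w : P → ℝ≥0∞)
    (hw : Measurable w) (hwt : ∀ p, w p ≠ ⊤) (A : ℕ → P → ℝ≥0∞) (A₀ : P → ℝ≥0∞)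
    (hA : ∀ n, Measurable (A n)) (hA₀ : Measurable A₀) (hA₀t : ∀ p, A₀ p ≠ ⊤)
    (hlim : ∀ p, Tendsto (fun n => A n p) atTop (𝓝 (A₀ p)))
    (M : ℝ≥0∞) (hM : M ≠ ⊤) (hb : ∀ n, ∫⁻ p, w p * (A n p * A n p) ∂μ ≤ M) :
    (∫⁻ p, w p * (A₀ p * A₀ p) ∂μ ≠ ⊤) ∧
    Tendsto (fun n => ∫⁻ p, w p * (A n p * A₀ p) ∂μ) atTop
      (𝓝 (∫⁻ p, w p * (A₀ p * A₀ p) ∂μ)) := by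
  have hfin : ∫⁻ p, w p * (A₀ p * A₀ p) ∂μ ≠ ⊤ := by
    refine ne_top_of_le_ne_top hM ?_
    calc ∫⁻ p, w p * (A₀ p * A₀ p) ∂μ
        = ∫⁻ p, liminf (fun n => w p * (A n p * A n p)) atTop ∂μ := by
          congr with p
          refine (Tendsto.liminf_eq ?_).symm
          exact ENNReal.Tendsto.const_mul (ENNReal.Tendsto.mul (hlim p) (Or.inr (hA₀t p))
            (hlim p) (Or.inr (hA₀t p))) (Or.inr (hwt p))
      _ ≤ liminf (fun n => ∫⁻ p, w p * (A n p * A n p) ∂μ) atTop :=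
          lintegral_liminf_le (fun n => by fun_prop)
      _ ≤ M := liminf_le_of_le (by isBoundedDefault) (fun b hb' => by
          obtain ⟨n, hn⟩ := hb'.exists
          exact hn.trans (hb n))
  refine ⟨hfin, ?_⟩
  refine tendsto_of_trunc ?_ (fun L n => ∫⁻ p, w p * (min (A n p) (L * A₀ p) * A₀ p) ∂μ)
    (fun L => ∫⁻ p, w p * (min (A₀ p) (L * A₀ p) * A₀ p) ∂μ) (fun L => (L : ℝ≥0∞)⁻¹ * M) ?_ ?_ ?_ ?_
  · calc ∫⁻ p, w p * (A₀ p * A₀ p) ∂μ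
        = ∫⁻ p, liminf (fun n => w p * (A n p * A₀ p)) atTop ∂μ := by
          congr with p
          refine (Tendsto.liminf_eq ?_).symm
          exact ENNReal.Tendsto.const_mul (ENNReal.Tendsto.mul_const (hlim p) (Or.inr (hA₀t p)))
            (Or.inr (hwt p))
      _ ≤ _ := lintegral_liminf_le (fun n => by fun_prop)
  · intro L
    refine tendsto_lintegral_of_dominated_convergence
      (fun p => (L : ℝ≥0∞) * (w p * (A₀ p * A₀ p))) (fun n => by fun_prop) ?_ ?_ ?_
    · intro n
      refine Eventually.of_forall fun p => ?_
      calc w p * (min (A n p) (L * A₀ p) * A₀ p) ≤ w p * ((L * A₀ p) * A₀ p) := by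
            gcongr; exact min_le_right _ _
        _ = _ := by ring
    · rw [lintegral_const_mul _ (by fun_prop)]
      exact ENNReal.mul_ne_top (by simp) hfin
    · refine Eventually.of_forall fun p => ?_
      exact ENNReal.Tendsto.const_mul (ENNReal.Tendsto.mul_const
        ((hlim p).min tendsto_const_nhds) (Or.inr (hA₀t p))) (Or.inr (hwt p))
  · intro L
    refine lintegral_mono fun p => ?_
    dsimp only
    gcongr
    exact min_le_left _ _
  · have := ENNReal.Tendsto.mul_const (b := M) ENNReal.tendsto_inv_nat_nhds_zero (Or.inr hM)
    simpa using this
  · filter_upwards [eventually_ge_atTop 1] with L hL n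
    have hL0 : (L : ℝ≥0∞) ≠ 0 := by simp; omega
    calc ∫⁻ p, w p * (A n p * A₀ p) ∂μ
        ≤ ∫⁻ p, (w p * (min (A n p) (L * A₀ p) * A₀ p) +
            (L : ℝ≥0∞)⁻¹ * (w p * (A n p * A n p))) ∂μ := by
          refine lintegral_mono fun p => ?_
          dsimp only
          rcases le_total (A n p) (L * A₀ p) with h | h
          · rw [min_eq_left h]
            exact le_self_add
          · refine le_add_left ?_
            have : A₀ p ≤ (L : ℝ≥0∞)⁻¹ * A n p := by
              rw [mul_comm, ← div_eq_mul_inv, ENNReal.le_div_iff_mul_le (Or.inl hL0) (by simp)]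
              rwa [mul_comm]
            calc w p * (A n p * A₀ p) ≤ w p * (A n p * ((L : ℝ≥0∞)⁻¹ * A n p)) := by gcongr
              _ = _ := by ring
      _ = ∫⁻ p, (w p * (min (A n p) (L * A₀ p) * A₀ p)) ∂μ +
            (L : ℝ≥0∞)⁻¹ * ∫⁻ p, (w p * (A n p * A n p)) ∂μ := by
          rw [lintegral_add_left (by fun_prop), lintegral_const_mul _ (by fun_prop)]
      _ ≤ _ := by gcongr; exact hb n

/-- Local convergence of `∫ |f_n|²` on sets of finite measure. -/
lemma local_conv {X : Type*} [MeasurableSpace X] (μ : Measure X) (p : ℝ) (hp : 2 < p)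
    (f : ℕ → X → ℂ) (f₀ : X → ℂ)
    (hmeas : ∀ n, Measurable (f n))
    (hae : ∀ᵐ x ∂μ, Tendsto (fun n => f n x) atTop (𝓝 (f₀ x)))
    (B : ℝ≥0∞) (hB : B ≠ ⊤) (hLp : ∀ n, ∫⁻ x, (‖f n x‖₊ : ℝ≥0∞) ^ p ∂μ ≤ B)
    (s : Set X) (hμs : μ s ≠ ⊤) :
    (∫⁻ x in s, (‖f₀ x‖₊ : ℝ≥0∞) ^ 2 ∂μ ≠ ⊤) ∧
    Tendsto (fun n => ∫⁻ x in s, (‖f n x‖₊ : ℝ≥0∞) ^ 2 ∂μ) atTop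
      (𝓝 (∫⁻ x in s, (‖f₀ x‖₊ : ℝ≥0∞) ^ 2 ∂μ)) := by
  have haes := ae_restrict_of_ae (s := s) hae
  have hlim : ∀ᵐ x ∂(μ.restrict s), Tendsto (fun n => (‖f n x‖₊ : ℝ≥0∞) ^ 2) atTop
      (𝓝 ((‖f₀ x‖₊ : ℝ≥0∞) ^ 2)) := by
    filter_upwards [haes] with x hx
    exact ENNReal.Tendsto.pow (ENNReal.tendsto_coe.2 hx.nnnorm)
  have key : ∀ L : ℕ, 1 ≤ L → ∀ n, ∫⁻ x in s, (‖f n x‖₊ : ℝ≥0∞) ^ 2 ∂μ ≤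
      ∫⁻ x in s, min ((‖f n x‖₊ : ℝ≥0∞) ^ 2) ((L : ℝ≥0∞) ^ 2) ∂μ + (L : ℝ≥0∞) ^ (2 - p) * B := by
    intro L hL n
    have hL0 : (L : ℝ≥0∞) ≠ 0 := by simp; omega
    calc ∫⁻ x in s, (‖f n x‖₊ : ℝ≥0∞) ^ 2 ∂μ
        ≤ ∫⁻ x in s, (min ((‖f n x‖₊ : ℝ≥0∞) ^ 2) ((L : ℝ≥0∞) ^ 2) +
            (L : ℝ≥0∞) ^ (2 - p) * (‖f n x‖₊ : ℝ≥0∞) ^ p) ∂μ := by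
          refine lintegral_mono fun x => ?_
          dsimp only
          rcases le_total (‖f n x‖₊ : ℝ≥0∞) L with h | h
          · rw [min_eq_left (by gcongr)]
            exact le_self_add
          · refine le_add_left ?_
            generalize (‖f n x‖₊ : ℝ≥0∞) = a at *
            by_cases hat : a = ⊤
            · rw [hat, ENNReal.top_rpow_of_pos (by linarith), ENNReal.mul_top]
              · exact le_top
              · rw [Ne, ENNReal.rpow_eq_zero_iff]
                simp [hL0]
            have ha0 : a ≠ 0 := fun h0 => hL0 (by simpa [h0] using h)
            calc a ^ 2 = a ^ (2 - p) * a ^ p := by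
                  rw [← ENNReal.rpow_add _ _ ha0 hat]; norm_num
              _ ≤ _ := by
                  gcongr ?_ * _
                  rw [show 2 - p = -(p - 2) by ring, ENNReal.rpow_neg, ENNReal.rpow_neg]
                  exact ENNReal.inv_le_inv.2 (ENNReal.rpow_le_rpow h (by linarith))
      _ = ∫⁻ x in s, min ((‖f n x‖₊ : ℝ≥0∞) ^ 2) ((L : ℝ≥0∞) ^ 2) ∂μ +
          (L : ℝ≥0∞) ^ (2 - p) * ∫⁻ x in s, (‖f n x‖₊ : ℝ≥0∞) ^ p ∂μ := by
          rw [lintegral_add_left (by fun_prop), lintegral_const_mul _ (by fun_prop)]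
      _ ≤ _ := by
          gcongr
          exact (setLIntegral_le_lintegral _ _).trans (hLp n)
  have hfatou : ∫⁻ x in s, (‖f₀ x‖₊ : ℝ≥0∞) ^ 2 ∂μ ≤
      liminf (fun n => ∫⁻ x in s, (‖f n x‖₊ : ℝ≥0∞) ^ 2 ∂μ) atTop := by
    calc ∫⁻ x in s, (‖f₀ x‖₊ : ℝ≥0∞) ^ 2 ∂μ
        = ∫⁻ x in s, liminf (fun n => (‖f n x‖₊ : ℝ≥0∞) ^ 2) atTop ∂μ := by
          refine lintegral_congr_ae ?_
          filter_upwards [hlim] with x hx using hx.liminf_eq.symm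
      _ ≤ _ := lintegral_liminf_le (fun n => by fun_prop)
  constructor
  · have h1 : ∀ n, ∫⁻ x in s, (‖f n x‖₊ : ℝ≥0∞) ^ 2 ∂μ ≤ μ s + B := by
      intro n
      refine (key 1 le_rfl n).trans ?_
      simp only [Nat.cast_one, one_pow, ENNReal.one_rpow, one_mul]
      gcongr
      calc ∫⁻ x in s, min ((‖f n x‖₊ : ℝ≥0∞) ^ 2) 1 ∂μ ≤ ∫⁻ x in s, 1 ∂μ :=
            lintegral_mono fun x => min_le_right _ _
        _ = μ s := by simp
    refine ne_top_of_le_ne_top (ENNReal.add_ne_top.2 ⟨hμs, hB⟩) (hfatou.trans ?_)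
    refine liminf_le_of_le (by isBoundedDefault) (fun b hb' => ?_)
    obtain ⟨n, hn⟩ := hb'.exists
    exact hn.trans (h1 n)
  · refine tendsto_of_trunc hfatou
      (fun L n => ∫⁻ x in s, min ((‖f n x‖₊ : ℝ≥0∞) ^ 2) ((L : ℝ≥0∞) ^ 2) ∂μ)
      (fun L => ∫⁻ x in s, min ((‖f₀ x‖₊ : ℝ≥0∞) ^ 2) ((L : ℝ≥0∞) ^ 2) ∂μ)
      (fun L => (L : ℝ≥0∞) ^ (2 - p) * B) ?_ ?_ ?_ ?_
    · intro L
      refine tendsto_lintegral_of_dominated_convergence (fun _ => (L : ℝ≥0∞) ^ 2)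
        (fun n => by fun_prop) (fun n => Eventually.of_forall fun x => min_le_right _ _) ?_ ?_
      · simp only [lintegral_const, Measure.restrict_apply_univ]
        exact ENNReal.mul_ne_top (by simp) hμs
      · filter_upwards [hlim] with x hx using hx.min tendsto_const_nhds
    · intro L
      exact lintegral_mono fun x => min_le_left _ _
    · have h1 : Tendsto (fun L : ℕ => (L : ℝ≥0∞) ^ (2 - p)) atTop (𝓝 0) := by
        have h2 : Tendsto (fun L : ℕ => ((L : ℝ≥0∞)⁻¹) ^ (p - 2)) atTop (𝓝 ((0 : ℝ≥0∞) ^ (p - 2))) :=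
          (ENNReal.continuous_rpow_const.tendsto _).comp ENNReal.tendsto_inv_nat_nhds_zero
        rw [ENNReal.zero_rpow_of_pos (by linarith)] at h2
        refine h2.congr fun L => ?_
        rw [ENNReal.inv_rpow, ← ENNReal.rpow_neg, neg_sub]
      have := ENNReal.Tendsto.mul_const (b := B) h1 (Or.inr hB)
      simpa using this
    · filter_upwards [eventually_ge_atTop 1] with L hL using key L hL

/-- the ball indicator -/
def phi (d : ℕ) (x : EuclideanSpace ℝ (Fin d)) (q : ℝ × EuclideanSpace ℝ (Fin d)) : ℝ≥0∞ :=
  indicator {q : EuclideanSpace ℝ (Fin d) × (ℝ × EuclideanSpace ℝ (Fin d)) |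
    dist q.1 q.2.2 < q.2.1} (fun _ => 1) (x, q)

/-- the weight -/
def wgt (d : ℕ) (lam : ℝ) (q : ℝ × EuclideanSpace ℝ (Fin d)) : ℝ≥0∞ :=
  ENNReal.ofReal (q.1 ^ (-lam - d - 1))

/-- the half-space measure -/
def hmu (d : ℕ) : Measure (ℝ × EuclideanSpace ℝ (Fin d)) :=
  (volume.restrict (Ioi (0 : ℝ))).prod volume

instance (d : ℕ) : SFinite (hmu d) := by unfold hmu; infer_instance

/-- the positive definite kernel -/
def kerJ (d : ℕ) (lam : ℝ) (x y : EuclideanSpace ℝ (Fin d)) : ℝ≥0∞ :=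
  ∫⁻ q, wgt d lam q * (phi d x q * phi d y q) ∂(hmu d)

@[fun_prop]
lemma measurable_phi (d : ℕ) : Measurable (fun t : EuclideanSpace ℝ (Fin d) ×
    (ℝ × EuclideanSpace ℝ (Fin d)) => phi d t.1 t.2) := by
  have : MeasurableSet {q : EuclideanSpace ℝ (Fin d) × (ℝ × EuclideanSpace ℝ (Fin d)) |
    dist q.1 q.2.2 < q.2.1} := measurableSet_lt (by fun_prop) (by fun_prop)
  exact measurable_const.indicator this

@[fun_prop]
lemma measurable_wgt (d : ℕ) (lam : ℝ) : Measurable (wgt d lam) := by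
  unfold wgt; fun_prop

@[fun_prop]
lemma measurable_kerJ (d : ℕ) (lam : ℝ) : Measurable (fun t : EuclideanSpace ℝ (Fin d) ×
    EuclideanSpace ℝ (Fin d) => kerJ d lam t.1 t.2) := by
  unfold kerJ
  exact Measurable.lintegral_prod_right'
    (f := fun t : (EuclideanSpace ℝ (Fin d) × EuclideanSpace ℝ (Fin d)) ×
      (ℝ × EuclideanSpace ℝ (Fin d)) => wgt d lam t.2 * (phi d t.1.1 t.2 * phi d t.1.2 t.2))
    (by fun_prop)

/-- local mass -/
def mass (d : ℕ) (u : EuclideanSpace ℝ (Fin d) → ℝ≥0∞) (q : ℝ × EuclideanSpace ℝ (Fin d)) :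
    ℝ≥0∞ := ∫⁻ x, u x * phi d x q

lemma measurable_mass (d : ℕ) (u : EuclideanSpace ℝ (Fin d) → ℝ≥0∞) (hu : Measurable u) :
    Measurable (mass d u) := by
  unfold mass
  exact Measurable.lintegral_prod_right'
    (f := fun t : (ℝ × EuclideanSpace ℝ (Fin d)) × EuclideanSpace ℝ (Fin d) =>
      u t.2 * phi d t.2 t.1) (by fun_prop)

lemma mass_eq (d : ℕ) (u : EuclideanSpace ℝ (Fin d) → ℝ≥0∞)
    (q : ℝ × EuclideanSpace ℝ (Fin d)) :
    mass d u q = ∫⁻ x in Metric.ball q.2 q.1, u x := by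
  unfold mass
  rw [← lintegral_indicator measurableSet_ball]
  congr with x
  by_cases h : dist x q.2 < q.1 <;> simp [phi, indicator, Metric.mem_ball, h]

lemma mix_eq (d : ℕ) (lam : ℝ) (u v : EuclideanSpace ℝ (Fin d) → ℝ≥0∞) (hu : Measurable u)
    (hv : Measurable v) :
    ∫⁻ x, u x * ∫⁻ y, v y * kerJ d lam x y =
      ∫⁻ q, wgt d lam q * (mass d u q * mass d v q) ∂(hmu d) := by
  have hmv := measurable_mass d v hv
  have h1 : ∀ x, ∫⁻ y, v y * kerJ d lam x y =
      ∫⁻ q, wgt d lam q * phi d x q * mass d v q ∂(hmu d) := by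
    intro x
    calc ∫⁻ y, v y * kerJ d lam x y
        = ∫⁻ y, (∫⁻ q, v y * (wgt d lam q * (phi d x q * phi d y q)) ∂(hmu d)) ∂volume := by
          congr with y
          rw [kerJ, lintegral_const_mul _ (by fun_prop)]
      _ = ∫⁻ q, ∫⁻ y, v y * (wgt d lam q * (phi d x q * phi d y q)) ∂volume ∂(hmu d) := by
          rw [lintegral_lintegral_swap]
          unfold Function.uncurry
          fun_prop
      _ = _ := by
          congr with q
          rw [mass, ← lintegral_const_mul _ (by fun_prop)]
          congr with y
          ring
  calc ∫⁻ x, u x * ∫⁻ y, v y * kerJ d lam x y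
      = ∫⁻ x, ∫⁻ q, u x * (wgt d lam q * phi d x q * mass d v q) ∂(hmu d) := by
        congr with x
        rw [h1, lintegral_const_mul _ (by fun_prop)]
    _ = ∫⁻ q, ∫⁻ x, u x * (wgt d lam q * phi d x q * mass d v q) ∂volume ∂(hmu d) := by
        rw [lintegral_lintegral_swap]
        unfold Function.uncurry
        fun_prop
    _ = _ := by
        congr with q
        have : mass d u q = ∫⁻ x, u x * phi d x q := rfl
        rw [this, mul_comm (∫⁻ x, u x * phi d x q), ← mul_assoc, ← lintegral_const_mul _ (by fun_prop)]
        congr with x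
        ring

lemma kerJ_eq (d : ℕ) (lam : ℝ) (x y : EuclideanSpace ℝ (Fin d)) :
    kerJ d lam x y = ∫⁻ r in Ioi (0 : ℝ), ENNReal.ofReal (r ^ (-lam - d - 1)) *
      volume (Metric.ball x r ∩ Metric.ball y r) := by
  unfold kerJ hmu
  rw [lintegral_prod _ (by fun_prop)]
  congr with r
  rw [← lintegral_indicator_one (measurableSet_ball.inter measurableSet_ball),
    ← lintegral_const_mul _ (measurable_one.indicator (measurableSet_ball.inter measurableSet_ball))]
  congr with z
  by_cases h : dist x z < r <;> by_cases h' : dist y z < r <;>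
    simp [wgt, phi, indicator, Metric.mem_ball, dist_comm z, h, h']

lemma lint_rpow (lam c : ℝ) (hlam : 0 < lam) (hc : 0 < c) :
    ∫⁻ r in Ioi c, ENNReal.ofReal (r ^ (-lam - 1)) = ENNReal.ofReal (c ^ (-lam) / lam) := by
  rw [← ofReal_integral_eq_lintegral_ofReal (integrableOn_Ioi_rpow_of_lt (by linarith) hc),
    integral_Ioi_rpow_of_lt (by linarith) hc]
  · congr 1
    rw [show -lam - 1 + 1 = -lam by ring]
    field_simp
  · filter_upwards [ae_restrict_mem measurableSet_Ioi] with r hr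
    exact Real.rpow_nonneg (hc.le.trans (le_of_lt hr)) _

lemma rpow_split (d : ℕ) (lam r : ℝ) (hr : 0 < r) :
    r ^ (-lam - d - 1) * r ^ d = r ^ (-lam - 1) := by
  rw [← Real.rpow_natCast, ← Real.rpow_add hr]
  congr 1; ring

lemma kerJ_upper (d : ℕ) (hd : 1 ≤ d) (lam : ℝ) (hlam : 0 < lam)
    (x y : EuclideanSpace ℝ (Fin d)) (hxy : x ≠ y) :
    kerJ d lam x y ≤ volume (Metric.ball (0 : EuclideanSpace ℝ (Fin d)) 1) *
      ENNReal.ofReal (2 ^ lam / lam) * ENNReal.ofReal (‖x - y‖ ^ (-lam)) := by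
  have : Nonempty (Fin d) := ⟨⟨0, hd⟩⟩
  have hD : 0 < ‖x - y‖ := norm_pos_iff.2 (sub_ne_zero.2 hxy)
  set V := volume (Metric.ball (0 : EuclideanSpace ℝ (Fin d)) 1) with hV
  have h2 : ‖x - y‖ / 2 > 0 := by positivity
  rw [kerJ_eq]
  calc ∫⁻ r in Ioi (0 : ℝ), ENNReal.ofReal (r ^ (-lam - d - 1)) *
        volume (Metric.ball x r ∩ Metric.ball y r)
      ≤ ∫⁻ r in Ioi (0 : ℝ), (Ioi (‖x - y‖ / 2)).indicator
          (fun r => V * ENNReal.ofReal (r ^ (-lam - 1))) r := by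
        refine setLIntegral_mono' measurableSet_Ioi fun r hr => ?_
        have hr : 0 < r := hr
        by_cases h : r ∈ Ioi (‖x - y‖ / 2)
        · rw [indicator_of_mem h]
          calc _ ≤ ENNReal.ofReal (r ^ (-lam - d - 1)) * volume (Metric.ball x r) := by
                gcongr; exact inter_subset_left
            _ = _ := by
                rw [Measure.addHaar_ball _ _ hr.le, ← rpow_split d lam r hr,
                  ENNReal.ofReal_mul (by positivity)]
                simp only [finrank_euclideanSpace, Fintype.card_fin]
                ring
        · rw [indicator_of_notMem h]
          have h : r ≤ ‖x - y‖ / 2 := by simpa using h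
          have : Metric.ball x r ∩ Metric.ball y r = ∅ := by
            apply Disjoint.inter_eq
            apply Metric.ball_disjoint_ball
            rw [dist_eq_norm]; linarith
          simp [this]
    _ = ∫⁻ r in Ioi (‖x - y‖ / 2), V * ENNReal.ofReal (r ^ (-lam - 1)) := by
        rw [setLIntegral_indicator measurableSet_Ioi]
        congr 2
        exact inter_eq_left.2 (Ioi_subset_Ioi h2.le)
    _ = _ := by
        rw [lintegral_const_mul _ (by fun_prop), lint_rpow _ _ hlam h2, mul_assoc,
          ← ENNReal.ofReal_mul (by positivity)]
        congr 2
        rw [Real.div_rpow hD.le (by norm_num), Real.rpow_neg (by norm_num : (0:ℝ) ≤ 2)]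
        field_simp

lemma kerJ_lower (d : ℕ) (hd : 1 ≤ d) (lam : ℝ) (hlam : 0 < lam)
    (x y : EuclideanSpace ℝ (Fin d)) (hxy : x ≠ y) :
    volume (Metric.ball (0 : EuclideanSpace ℝ (Fin d)) 1) *
      ENNReal.ofReal ((1 / 2) ^ d * 2 ^ (-lam) / lam) * ENNReal.ofReal (‖x - y‖ ^ (-lam)) ≤
      kerJ d lam x y := by
  have : Nonempty (Fin d) := ⟨⟨0, hd⟩⟩
  have hD : 0 < ‖x - y‖ := norm_pos_iff.2 (sub_ne_zero.2 hxy)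
  set V := volume (Metric.ball (0 : EuclideanSpace ℝ (Fin d)) 1) with hV
  have h2 : 2 * ‖x - y‖ > 0 := by positivity
  rw [kerJ_eq]
  calc ∫⁻ r in Ioi (0 : ℝ), ENNReal.ofReal (r ^ (-lam - d - 1)) *
        volume (Metric.ball x r ∩ Metric.ball y r)
      ≥ ∫⁻ r in Ioi (2 * ‖x - y‖), ENNReal.ofReal (r ^ (-lam - d - 1)) *
        volume (Metric.ball x r ∩ Metric.ball y r) := lintegral_mono_set (Ioi_subset_Ioi h2.le)
    _ ≥ ∫⁻ r in Ioi (2 * ‖x - y‖),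
          V * ENNReal.ofReal ((1 / 2) ^ d) * ENNReal.ofReal (r ^ (-lam - 1)) := by
        refine setLIntegral_mono' measurableSet_Ioi fun r hr => ?_
        have hr' : 2 * ‖x - y‖ < r := hr
        have hr : 0 < r := by linarith
        calc _ = ENNReal.ofReal (r ^ (-lam - d - 1)) * volume (Metric.ball x (r / 2)) := by
                rw [Measure.addHaar_ball _ _ (by positivity), ← rpow_split d lam r hr,
                  ENNReal.ofReal_mul (by positivity)]
                simp only [finrank_euclideanSpace, Fintype.card_fin]
                rw [show (r / 2) ^ d = (1 / 2) ^ d * r ^ d by rw [← mul_pow]; ring,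
                  ENNReal.ofReal_mul (by positivity)]
                ring
            _ ≤ _ := by
                gcongr
                apply subset_inter
                · exact Metric.ball_subset_ball (by linarith)
                · apply Metric.ball_subset_ball'
                  rw [dist_eq_norm]; linarith
    _ = _ := by
        rw [lintegral_const_mul _ (by fun_prop), lint_rpow _ _ hlam h2, mul_assoc, mul_assoc,
          ← ENNReal.ofReal_mul (by positivity), ← ENNReal.ofReal_mul (by positivity)]
        congr 2
        rw [Real.mul_rpow (by norm_num) hD.le]
        field_simp

lemma riesz_aux
    (d : ℕ) (hd : 1 ≤ d) (lam p : ℝ) (hlam₀ : 0 < lam) (hp : 2 < p)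
    (f : ℕ → EuclideanSpace ℝ (Fin d) → ℂ) (f₀ : EuclideanSpace ℝ (Fin d) → ℂ)
    (hmeas : ∀ n, Measurable (f n)) (hmeas₀ : Measurable f₀)
    (hae : ∀ᵐ x : EuclideanSpace ℝ (Fin d), Tendsto (fun n => f n x) atTop (nhds (f₀ x)))
    (hriesz : ∃ M : ℝ≥0∞, M < ⊤ ∧ ∀ n, rieszEnergy d lam (f n) ≤ M)
    (hLp : ∃ B : ℝ≥0∞, B < ⊤ ∧ ∀ n, eLpNorm (f n) (ENNReal.ofReal p) volume ≤ B) :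
    Tendsto (fun n => ∫⁻ x, ∫⁻ y, (‖f n x‖₊ : ℝ≥0∞) ^ 2 * (‖f₀ y‖₊ : ℝ≥0∞) ^ 2 *
        ENNReal.ofReal (‖x - y‖ ^ (-lam)))
      atTop (nhds (rieszEnergy d lam f₀)) := by
  have : Nonempty (Fin d) := ⟨⟨0, hd⟩⟩
  obtain ⟨M, hM, hMn⟩ := hriesz
  obtain ⟨B, hB, hBn⟩ := hLp
  have hp0 : 0 < p := by linarith
  have hBn' : ∀ n, ∫⁻ x, (‖f n x‖₊ : ℝ≥0∞) ^ p ≤ B ^ p := by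
    intro n
    have h := hBn n
    rw [eLpNorm_eq_lintegral_rpow_enorm_toReal (by simp [hp0]) (by simp),
      ENNReal.toReal_ofReal hp0.le, one_div, ENNReal.rpow_inv_le_iff hp0] at h
    exact h
  set u : ℕ → EuclideanSpace ℝ (Fin d) → ℝ≥0∞ := fun n x => (‖f n x‖₊ : ℝ≥0∞) ^ 2 with hu
  set u₀ : EuclideanSpace ℝ (Fin d) → ℝ≥0∞ := fun x => (‖f₀ x‖₊ : ℝ≥0∞) ^ 2 with hu₀
  set k : EuclideanSpace ℝ (Fin d) → EuclideanSpace ℝ (Fin d) → ℝ≥0∞ :=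
    fun x y => ENNReal.ofReal (‖x - y‖ ^ (-lam)) with hk
  have hum : ∀ n, Measurable (u n) := fun n => by simp only [hu]; fun_prop
  have hum₀ : Measurable u₀ := by simp only [hu₀]; fun_prop
  have hkm : Measurable (fun t : EuclideanSpace ℝ (Fin d) × EuclideanSpace ℝ (Fin d) =>
      k t.1 t.2) := by simp only [hk]; fun_prop
  have hkx : ∀ x, Measurable (k x) := fun x => by simp only [hk]; fun_prop
  have hmix : ∀ a b : EuclideanSpace ℝ (Fin d) → ℝ≥0∞, Measurable b →
      ∫⁻ x, ∫⁻ y, a x * b y * k x y = ∫⁻ x, a x * ∫⁻ y, b y * k x y := by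
    intro a b hb
    congr with x
    rw [← lintegral_const_mul _ (hb.fun_mul (hkx x))]
    congr with y
    ring
  set V := volume (Metric.ball (0 : EuclideanSpace ℝ (Fin d)) 1) with hV
  have hVt : V ≠ ⊤ := measure_ball_lt_top.ne
  have hV0 : V ≠ 0 := (Metric.measure_ball_pos _ _ one_pos).ne'
  set c₂ := V * ENNReal.ofReal (2 ^ lam / lam) with hc₂
  have hc₂t : c₂ ≠ ⊤ := ENNReal.mul_ne_top hVt ENNReal.ofReal_ne_top
  set c₀ := V * ENNReal.ofReal ((1 / 2) ^ d * 2 ^ (-lam) / lam) with hc₀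
  have hc₀t : c₀ ≠ ⊤ := ENNReal.mul_ne_top hVt ENNReal.ofReal_ne_top
  have hc₀0 : c₀ ≠ 0 := by
    refine mul_ne_zero hV0 ?_
    rw [Ne, ENNReal.ofReal_eq_zero, not_le]
    positivity
  have hkJ : ∀ x y, k x y ≤ c₀⁻¹ * kerJ d lam x y := by
    intro x y
    by_cases hxy : x = y
    · have : k x y = 0 := by simp [hk, hxy, Real.zero_rpow (neg_ne_zero.2 hlam₀.ne')]
      rw [this]; exact zero_le
    · rw [mul_comm, ← div_eq_mul_inv, ENNReal.le_div_iff_mul_le (Or.inl hc₀0) (Or.inl hc₀t),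
        mul_comm]
      exact kerJ_lower d hd lam hlam₀ x y hxy
  have hJk : ∀ x, ∀ᵐ y, kerJ d lam x y ≤ c₂ * k x y := by
    intro x
    have : ∀ᵐ y : EuclideanSpace ℝ (Fin d), y ≠ x := by
      simp [ae_iff]
    filter_upwards [this] with y hy
    exact kerJ_upper d hd lam hlam₀ x y (Ne.symm hy)
  -- masses
  have hloc := fun q : ℝ × EuclideanSpace ℝ (Fin d) =>
    local_conv volume p hp f f₀ hmeas hae (B ^ p)
      (ENNReal.rpow_ne_top_of_nonneg hp0.le hB.ne) hBn' (Metric.ball q.2 q.1)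
      measure_ball_lt_top.ne
  have hJn : ∀ n, ∫⁻ q, wgt d lam q * (mass d (u n) q * mass d (u n) q) ∂(hmu d) ≤ c₂ * M := by
    intro n
    rw [← mix_eq d lam _ _ (hum n) (hum n)]
    calc ∫⁻ x, u n x * ∫⁻ y, u n y * kerJ d lam x y
        ≤ ∫⁻ x, c₂ * (u n x * ∫⁻ y, u n y * k x y) := by
          refine lintegral_mono fun x => ?_
          calc u n x * ∫⁻ y, u n y * kerJ d lam x y
              ≤ u n x * ∫⁻ y, c₂ * (u n y * k x y) := by
                refine mul_le_mul' le_rfl ?_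
                refine lintegral_mono_ae ?_
                filter_upwards [hJk x] with y hy
                calc u n y * kerJ d lam x y ≤ u n y * (c₂ * k x y) := by gcongr
                  _ = _ := by ring
            _ = _ := by
                rw [lintegral_const_mul _ ((hum n).fun_mul (hkx x))]
                ring
      _ = c₂ * ∫⁻ x, u n x * ∫⁻ y, u n y * k x y := by
          rw [lintegral_const_mul' _ _ hc₂t]
      _ ≤ c₂ * M := by
          rw [← hmix _ _ (hum n)]
          gcongr
          exact hMn n
  obtain ⟨hJfin, hJlim⟩ := weak_conv (hmu d) (wgt d lam) (measurable_wgt d lam)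
    (fun q => ENNReal.ofReal_ne_top) (fun n => mass d (u n)) (mass d u₀)
    (fun n => measurable_mass d _ (hum n)) (measurable_mass d _ hum₀)
    (fun q => by rw [mass_eq]; exact (hloc q).1)
    (fun q => by simp only [mass_eq]; exact (hloc q).2)
    (c₂ * M) (ENNReal.mul_ne_top hc₂t hM.ne) hJn
  simp only [← mix_eq d lam _ _ (hum _) hum₀, ← mix_eq d lam _ _ hum₀ hum₀] at hJfin hJlim
  -- complementary kernel
  set h : EuclideanSpace ℝ (Fin d) → EuclideanSpace ℝ (Fin d) → ℝ≥0∞ :=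
    fun x y => c₀⁻¹ * kerJ d lam x y - k x y with hh
  have hhm : Measurable (fun t : EuclideanSpace ℝ (Fin d) × EuclideanSpace ℝ (Fin d) =>
      h t.1 t.2) := by simp only [hh]; fun_prop
  have hsum : ∀ x, (∫⁻ y, u₀ y * k x y) + (∫⁻ y, u₀ y * h x y) =
      c₀⁻¹ * ∫⁻ y, u₀ y * kerJ d lam x y := by
    intro x
    have hJx : Measurable (fun y => kerJ d lam x y) := by fun_prop
    rw [← lintegral_add_left (hum₀.fun_mul (hkx x)), ← lintegral_const_mul _ (hum₀.fun_mul hJx)]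
    congr with y
    rw [← mul_add, hh]
    dsimp only
    rw [add_tsub_cancel_of_le (hkJ x y)]
    ring
  have hPk : Measurable (fun x => ∫⁻ y, u₀ y * k x y) :=
    Measurable.lintegral_prod_right'
      (f := fun t : EuclideanSpace ℝ (Fin d) × EuclideanSpace ℝ (Fin d) => u₀ t.2 * k t.1 t.2)
      ((hum₀.comp measurable_snd).mul hkm)
  have hPh : Measurable (fun x => ∫⁻ y, u₀ y * h x y) :=
    Measurable.lintegral_prod_right'
      (f := fun t : EuclideanSpace ℝ (Fin d) × EuclideanSpace ℝ (Fin d) => u₀ t.2 * h t.1 t.2)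
      ((hum₀.comp measurable_snd).mul hhm)
  have hsplit : ∀ a : EuclideanSpace ℝ (Fin d) → ℝ≥0∞, Measurable a →
      (∫⁻ x, a x * ∫⁻ y, u₀ y * k x y) + (∫⁻ x, a x * ∫⁻ y, u₀ y * h x y) =
      c₀⁻¹ * ∫⁻ x, a x * ∫⁻ y, u₀ y * kerJ d lam x y := by
    intro a ha
    rw [← lintegral_add_left (ha.fun_mul hPk), ← lintegral_const_mul' _ _ (ENNReal.inv_ne_top.2 hc₀0)]
    congr with x
    rw [← mul_add, hsum]
    ring
  have hfatou : ∀ Φ : EuclideanSpace ℝ (Fin d) → ℝ≥0∞, Measurable Φ →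
      ∫⁻ x, u₀ x * Φ x ≤ liminf (fun n => ∫⁻ x, u n x * Φ x) atTop := by
    intro Φ hΦ
    calc ∫⁻ x, u₀ x * Φ x ≤ ∫⁻ x, liminf (fun n => u n x * Φ x) atTop := by
          refine lintegral_mono_ae ?_
          filter_upwards [hae] with x hx
          have hx' : Tendsto (fun n => u n x) atTop (𝓝 (u₀ x)) :=
            ENNReal.Tendsto.pow (ENNReal.tendsto_coe.2 hx.nnnorm)
          by_cases h0 : u₀ x = 0
          · rw [h0, zero_mul]; exact zero_le
          · exact (ENNReal.Tendsto.mul_const hx' (Or.inl h0)).liminf_eq.ge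
      _ ≤ _ := lintegral_liminf_le (fun n => (hum n).mul hΦ)
  have hmain : Tendsto (fun n => ∫⁻ x, u n x * ∫⁻ y, u₀ y * k x y) atTop
      (𝓝 (∫⁻ x, u₀ x * ∫⁻ y, u₀ y * k x y)) := by
    refine tendsto_of_split (b := fun n => ∫⁻ x, u n x * ∫⁻ y, u₀ y * h x y)
      (b₀ := ∫⁻ x, u₀ x * ∫⁻ y, u₀ y * h x y) ?_ ?_ (hfatou _ hPk) (hfatou _ hPh)
    · simp only [hsplit _ (hum _), hsplit _ hum₀]
      exact ENNReal.Tendsto.const_mul hJlim (Or.inr (ENNReal.inv_ne_top.2 hc₀0))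
    · rw [hsplit _ hum₀]
      exact ENNReal.mul_ne_top (ENNReal.inv_ne_top.2 hc₀0) hJfin
  have e₀ : rieszEnergy d lam f₀ = ∫⁻ x, u₀ x * ∫⁻ y, u₀ y * k x y := hmix u₀ u₀ hum₀
  rw [e₀]
  refine hmain.congr fun n => ?_
  exact (hmix (u n) u₀ hum₀).symm

end helpers

/-- If `f_n → f` a.e., the Riesz energies of the `f_n` are uniformly bounded and the `L^p`
norms of the `f_n` are uniformly bounded (`2 < p < ∞`), then
`∬ |f_n(x)|² |f(y)|² |x-y|^{-λ} dx dy → ∬ |f(x)|² |f(y)|² |x-y|^{-λ} dx dy`. -/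
theorem riesz_mixed_term_converges
    (d : ℕ) (hd : 1 ≤ d) (lam p : ℝ) (hlam₀ : 0 < lam) (hlam₁ : lam < d) (hp : 2 < p)
    (f : ℕ → EuclideanSpace ℝ (Fin d) → ℂ) (f₀ : EuclideanSpace ℝ (Fin d) → ℂ)
    (hmeas : ∀ n, Measurable (f n)) (hmeas₀ : Measurable f₀)
    (hae : ∀ᵐ x : EuclideanSpace ℝ (Fin d), Tendsto (fun n => f n x) atTop (nhds (f₀ x)))
    (hriesz : ∃ M : ℝ≥0∞, M < ⊤ ∧ ∀ n, rieszEnergy d lam (f n) ≤ M)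
    (hLp : ∃ B : ℝ≥0∞, B < ⊤ ∧ ∀ n, eLpNorm (f n) (ENNReal.ofReal p) volume ≤ B) :
    Tendsto (fun n => ∫⁻ x, ∫⁻ y, (‖f n x‖₊ : ℝ≥0∞) ^ 2 * (‖f₀ y‖₊ : ℝ≥0∞) ^ 2 *
        ENNReal.ofReal (‖x - y‖ ^ (-lam)))
      atTop (nhds (rieszEnergy d lam f₀)) := by
  exact riesz_aux d hd lam p hlam₀ hp f f₀ hmeas hmeas₀ hae hriesz hLp
end
end
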